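/- arXiv:1502.06875 — 2 statements merged into one kernel-verified Lean document; each statement's English description precedes it below -/
import Mathlib

section
/- (Pareto limit bound) Let ⟨V,E,d⟩ be a multi-weighted game graph and v₀ a vertex. If there exists an initial credit b ∈ ℕ^d such that Player 1 wins the energy game Δ_b⟨V,E,d⟩ from v₀, then there exists such an initial credit b with ‖b‖ ≤ (4|V|·‖E‖)^{2(d+2)³}. -/
/-! Multi-weighted game graphs, plays, strategies, energy and bounding games. -/

/-- A configuration: a vertex together with an accumulated weight vector. -/
abbrev Conf (V : Type) (d : ℕ) := V × (Fin d → ℤ)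

/-- A multi-weighted game graph: Player-1 vertices, a finite set of
weighted edges, such that every vertex has an outgoing edge. -/
structure MWG (V : Type) [Fintype V] [DecidableEq V] (d : ℕ) where
  P1 : Finset V
  E : Set (V × (Fin d → ℤ) × V)
  finE : E.Finite
  serial : ∀ v : V, ∃ u v', (v, u, v') ∈ E

variable {V : Type} [Fintype V] [DecidableEq V] {d : ℕ}

/-- The norm of an integer vector: max of absolute values of entries. -/
def vnorm {d : ℕ} (u : Fin d → ℤ) : ℕ := Finset.univ.sup fun i => (u i).natAbs

/-- `‖E‖`: the maximal norm of an edge label. -/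
noncomputable def enorm (G : MWG V d) : ℕ := G.finE.toFinset.sup fun e => vnorm e.2.1

/-- One step along an edge of the graph. -/
def Step (G : MWG V d) (c c' : Conf V d) : Prop := (c.1, c'.2 - c.2, c'.1) ∈ G.E

/-- A finite path, as a list of configurations. -/
def IsPathL (G : MWG V d) (π : List (Conf V d)) : Prop := π.Chain' (Step G)

/-- An infinite play from `v₀`, starting with weight `0`. -/
def IsPlay (G : MWG V d) (v₀ : V) (ρ : ℕ → Conf V d) : Prop :=
  ρ 0 = (v₀, 0) ∧ ∀ n, Step G (ρ n) (ρ (n+1))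

/-- A strategy: given the history (past configurations) and the current
configuration, choose a weighted move. -/
abbrev Strat (V : Type) (d : ℕ) := List (Conf V d) → Conf V d → (Fin d → ℤ) × V

/-- A valid strategy for the player owning the vertices in `P` always
chooses an edge of the game graph from the current vertex. -/
def ValidStrat (G : MWG V d) (P : Set V) (σ : Strat V d) : Prop :=
  ∀ h c, IsPathL G (h ++ [c]) → c.1 ∈ P → (c.1, (σ h c).1, (σ h c).2) ∈ G.E

/-- The history of a play before instant `n`. -/
def hist (ρ : ℕ → Conf V d) (n : ℕ) : List (Conf V d) := (List.range n).map ρ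

/-- A play is consistent with strategy `σ` of the player owning `P` if at
every configuration with vertex in `P` the next configuration is obtained
by playing the edge prescribed by `σ`. -/
def Consistent (P : Set V) (σ : Strat V d) (ρ : ℕ → Conf V d) : Prop :=
  ∀ n, (ρ n).1 ∈ P →
    ρ (n+1) = ((σ (hist ρ n) (ρ n)).2, (ρ n).2 + (σ (hist ρ n) (ρ n)).1)

/-- Player owning `P` wins the game with payoff `Win` from `v₀`. -/
def Wins (G : MWG V d) (P : Set V) (Win : (ℕ → Conf V d) → Prop) (v₀ : V) : Prop :=
  ∃ σ : Strat V d, ValidStrat G P σ ∧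
    ∀ ρ, IsPlay G v₀ ρ → Consistent P σ ρ → Win ρ

/-- Player 1's winning condition in the energy game with initial credit `b`. -/
def EnergyOK (b : Fin d → ℕ) (ρ : ℕ → Conf V d) : Prop :=
  ∀ n i, 0 ≤ (b i : ℤ) + (ρ n).2 i

/-- Player 1's winning condition in the bounding game: the norms of the
total weights of all the finite prefixes are bounded. -/
def BoundedPlay (ρ : ℕ → Conf V d) : Prop :=
  ∃ B : ℕ, ∀ n, vnorm ((ρ n).2) ≤ B

def P1WinsEnergy (G : MWG V d) (b : Fin d → ℕ) (v₀ : V) : Prop :=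
  Wins G (G.P1 : Set V) (EnergyOK b) v₀

def P2WinsEnergy (G : MWG V d) (b : Fin d → ℕ) (v₀ : V) : Prop :=
  Wins G {v | v ∉ G.P1} (fun ρ => ¬ EnergyOK b ρ) v₀

def P1WinsBounding (G : MWG V d) (v₀ : V) : Prop :=
  Wins G (G.P1 : Set V) BoundedPlay v₀

def P2WinsBounding (G : MWG V d) (v₀ : V) : Prop :=
  Wins G {v | v ∉ G.P1} (fun ρ => ¬ BoundedPlay ρ) v₀

/-- The negative unit vector `-e i`. -/
def negUnit (d : ℕ) (i : Fin d) : Fin d → ℤ := fun j => if j = i then -1 else 0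

/-- The lossy game graph: add a self-loop labelled `-e i` at each Player-1
vertex, for every coordinate `i`. -/
def lossy (G : MWG V d) : MWG V d where
  P1 := G.P1
  E := G.E ∪ (fun p : V × Fin d => (p.1, negUnit d p.2, p.1)) '' {p | p.1 ∈ G.P1}
  finE := G.finE.union ((Set.toFinite _).image _)
  serial := fun v => by
    obtain ⟨u, v', h⟩ := G.serial v
    exact ⟨u, v', Set.mem_union_left _ h⟩

/-- Every cycle of the game graph contains at least one Player-1 vertex. -/
def EveryCycleHasP1 (G : MWG V d) : Prop :=
  ∀ (n : ℕ) (c : ℕ → Conf V d), 0 < n → (∀ j < n, Step G (c j) (c (j+1))) →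
    (c 0).1 = (c n).1 → ∃ j < n, (c j).1 ∈ G.P1


namespace PLB

/-! ### Part A: from a winning strategy to a finite invariant family -/

inductive Reach (G : MWG V d) (σ : Strat V d) (v₀ : V) : List (Conf V d) → Conf V d → Prop
  | init : Reach G σ v₀ [] (v₀, 0)
  | p1 (h : List (Conf V d)) (c : Conf V d) : Reach G σ v₀ h c → c.1 ∈ G.P1 →
      Reach G σ v₀ (h ++ [c]) ((σ h c).2, c.2 + (σ h c).1)
  | p2 (h : List (Conf V d)) (c : Conf V d) (u : Fin d → ℤ) (v' : V) : Reach G σ v₀ h c →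
      c.1 ∉ G.P1 → (c.1, u, v') ∈ G.E → Reach G σ v₀ (h ++ [c]) (v', c.2 + u)

theorem path_snoc (G : MWG V d) (h : List (Conf V d)) (c c' : Conf V d)
    (hp : IsPathL G (h ++ [c])) (hs : Step G c c') : IsPathL G (h ++ [c] ++ [c']) := by
  unfold IsPathL at *
  show List.IsChain _ _
  rw [List.isChain_append]
  refine ⟨hp, List.isChain_singleton _, ?_⟩
  intro x hx y hy
  simp at hx hy
  subst hx; subst hy; exact hs

theorem Reach.path {G : MWG V d} {σ : Strat V d} {v₀ : V} (hσ : ValidStrat G (G.P1 : Set V) σ)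
    {h : List (Conf V d)} {c : Conf V d} (hr : Reach G σ v₀ h c) : IsPathL G (h ++ [c]) := by
  induction hr with
  | init => exact List.isChain_singleton _
  | p1 h c hr hc ih =>
    apply path_snoc _ _ _ _ ih
    have := hσ h c ih (by simpa using hc)
    simpa [Step] using this
  | p2 h c u v' hr hc he ih =>
    apply path_snoc _ _ _ _ ih
    simpa [Step] using he

def TailOK (G : MWG V d) (σ : Strat V d) (h : List (Conf V d)) (c : Conf V d)
    (t : ℕ → Conf V d) : Prop :=
  t 0 = c ∧ ∀ k, Step G (t k) (t (k+1)) ∧ ((t k).1 ∈ G.P1 →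
    t (k+1) = ((σ (h ++ (List.range k).map t) (t k)).2,
      (t k).2 + (σ (h ++ (List.range k).map t) (t k)).1))

theorem tail_cons {G : MWG V d} {σ : Strat V d} {h : List (Conf V d)} {c c' : Conf V d}
    {t : ℕ → Conf V d} (ht : TailOK G σ (h ++ [c]) c' t) (hs : Step G c c')
    (hc : c.1 ∈ G.P1 → c' = ((σ h c).2, c.2 + (σ h c).1)) :
    TailOK G σ h c (fun k => Nat.casesOn k c t) := by
  refine ⟨rfl, ?_⟩
  intro k
  cases k with
  | zero =>
    simp only [ht.1]
    refine ⟨hs, fun h1 => ?_⟩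
    simpa using hc h1
  | succ k =>
    obtain ⟨h1, h2⟩ := ht.2 k
    refine ⟨h1, fun h3 => ?_⟩
    have h4 := h2 h3
    have : h ++ List.map (fun k => Nat.casesOn k c t : ℕ → Conf V d) (List.range (k+1))
        = h ++ [c] ++ List.map t (List.range k) := by
      rw [List.range_succ_eq_map]
      simp [Function.comp_def]
    rw [this]
    exact h4

theorem Reach.extend {G : MWG V d} {σ : Strat V d} {v₀ : V}
    (hσ : ValidStrat G (G.P1 : Set V) σ)
    {h : List (Conf V d)} {c : Conf V d} (hr : Reach G σ v₀ h c) :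
    ∀ t, TailOK G σ h c t → ∃ ρ, TailOK G σ [] (v₀, 0) ρ ∧ ∀ k, ∃ n, ρ n = t k := by
  induction hr with
  | init => intro t ht; exact ⟨t, ht, fun k => ⟨k, rfl⟩⟩
  | p1 h c hr hc ih =>
    intro t ht
    have hs : Step G c ((σ h c).2, c.2 + (σ h c).1) := by
      have := hσ h c (hr.path hσ) (by simpa using hc)
      simpa [Step] using this
    obtain ⟨ρ, h1, h2⟩ := ih _ (tail_cons ht hs (fun _ => rfl))
    exact ⟨ρ, h1, fun k => h2 (k+1)⟩
  | p2 h c u v' hr hc he ih =>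
    intro t ht
    have hs : Step G c (v', c.2 + u) := by simpa [Step] using he
    obtain ⟨ρ, h1, h2⟩ := ih _ (tail_cons ht hs (fun h => absurd h hc))
    exact ⟨ρ, h1, fun k => h2 (k+1)⟩

theorem Reach.tail {G : MWG V d} {σ : Strat V d} {v₀ : V}
    (hσ : ValidStrat G (G.P1 : Set V) σ)
    {h : List (Conf V d)} {c : Conf V d} (hr : Reach G σ v₀ h c) :
    ∃ t, TailOK G σ h c t := by
  have key : ∀ s : {p : List (Conf V d) × Conf V d // Reach G σ v₀ p.1 p.2},
      ∃ s' : {p : List (Conf V d) × Conf V d // Reach G σ v₀ p.1 p.2},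
        s'.1.1 = s.1.1 ++ [s.1.2] ∧ Step G s.1.2 s'.1.2 ∧
        (s.1.2.1 ∈ G.P1 → s'.1.2 = ((σ s.1.1 s.1.2).2, s.1.2.2 + (σ s.1.1 s.1.2).1)) := by
    rintro ⟨⟨h, c⟩, hr⟩
    by_cases hc : c.1 ∈ G.P1
    · refine ⟨⟨(_, _), Reach.p1 h c hr hc⟩, rfl, ?_, fun _ => rfl⟩
      have := hσ h c (hr.path hσ) (by simpa using hc)
      simpa [Step] using this
    · obtain ⟨u, v', he⟩ := G.serial c.1
      refine ⟨⟨(_, _), Reach.p2 h c u v' hr hc he⟩, rfl, ?_, fun h => absurd h hc⟩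
      simpa [Step] using he
  choose nx hnx1 hnx2 hnx3 using key
  let seq : ℕ → {p : List (Conf V d) × Conf V d // Reach G σ v₀ p.1 p.2} :=
    fun k => nx^[k] ⟨(h, c), hr⟩
  have hseq : ∀ k, seq (k+1) = nx (seq k) := fun k => Function.iterate_succ_apply' _ _ _
  have hh : ∀ k, (seq k).1.1 = h ++ (List.range k).map (fun k => (seq k).1.2) := by
    intro k
    induction k with
    | zero => simp [seq]
    | succ k ih =>
      rw [hseq, hnx1, ih, List.range_succ]
      simp
  refine ⟨fun k => (seq k).1.2, rfl, fun k => ?_⟩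
  simp only [← hh, hseq]
  exact ⟨hnx2 _, hnx3 _⟩

theorem Reach.energy {G : MWG V d} {σ : Strat V d} {v₀ : V} {b : Fin d → ℕ}
    (hσ : ValidStrat G (G.P1 : Set V) σ)
    (hw : ∀ ρ, IsPlay G v₀ ρ → Consistent (G.P1 : Set V) σ ρ → EnergyOK b ρ)
    {h : List (Conf V d)} {c : Conf V d} (hr : Reach G σ v₀ h c) (i : Fin d) :
    0 ≤ (b i : ℤ) + c.2 i := by
  obtain ⟨t, ht⟩ := hr.tail hσ
  obtain ⟨ρ, hρ, h2⟩ := hr.extend hσ t ht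
  obtain ⟨n, hn⟩ := h2 0
  have := hw ρ ⟨hρ.1, fun n => (hρ.2 n).1⟩ (fun n hn => by
    have := (hρ.2 n).2 (by simpa using hn)
    simpa [hist] using this) n i
  rw [hn, ht.1] at this
  exact this

theorem edge_bound (G : MWG V d) {v v' : V} {u : Fin d → ℤ} (h : (v, u, v') ∈ G.E) (i : Fin d) :
    |u i| ≤ (enorm G : ℤ) := by
  have h1 : vnorm u ≤ enorm G := by
    unfold _root_.enorm
    exact Finset.le_sup (f := fun e : V × (Fin d → ℤ) × V => vnorm e.2.1) (G.finE.mem_toFinset.2 h)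
  have h2 : (u i).natAbs ≤ vnorm u := by
    unfold vnorm
    exact Finset.le_sup (f := fun i => (u i).natAbs) (Finset.mem_univ i)
  rw [Int.abs_eq_natAbs]
  omega

theorem dickson (s : Set (Fin d → ℕ)) : ∃ N : ℕ, ∀ a ∈ s, ∃ m ∈ s, m ≤ a ∧ ∀ i, m i ≤ N := by
  have hf : {x | Minimal (· ∈ s) x}.Finite :=
    WellQuasiOrderedLE.finite_of_isAntichain (setOfPred_minimal_antichain _)
  refine ⟨hf.toFinset.sup (fun x => Finset.univ.sup x), fun a ha => ?_⟩
  obtain ⟨m, hm, hmin⟩ := exists_minimal_le_of_wellFoundedLT (· ∈ s) a ha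
  refine ⟨m, hmin.1, hm, fun i => ?_⟩
  calc m i ≤ Finset.univ.sup m := Finset.le_sup (Finset.mem_univ i)
    _ ≤ _ := Finset.le_sup (f := fun x : Fin d → ℕ => Finset.univ.sup x) (hf.mem_toFinset.2 hmin)

theorem family (G : MWG V d) (v₀ : V) (b : Fin d → ℕ) (hw : P1WinsEnergy G b v₀) :
    ∃ A : V → Finset (Fin d → ℤ), (A v₀).Nonempty ∧
      (∀ v ∈ G.P1, ∀ a ∈ A v, ∃ u v' u', (v, u, v') ∈ G.E ∧ u' ≤ u ∧
        (∀ i, |u' i| ≤ (enorm G : ℤ)) ∧ a + u' ∈ A v') ∧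
      (∀ v, v ∉ G.P1 → ∀ a ∈ A v, ∀ u v', (v, u, v') ∈ G.E → ∃ u', u' ≤ u ∧
        (∀ i, |u' i| ≤ (enorm G : ℤ)) ∧ a + u' ∈ A v') := by
  classical
  obtain ⟨σ, hσ, hwin⟩ := hw
  let W : V → Set (Fin d → ℕ) := fun v => {a | ∃ h c, Reach G σ v₀ h c ∧ c.1 = v ∧
    ∀ i, (b i : ℤ) + c.2 i ≤ a i}
  choose N hN using fun v => dickson (W v)
  let NN : ℕ := Finset.univ.sup N
  have hNN : ∀ v, N v ≤ NN := fun v => Finset.le_sup (Finset.mem_univ v)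
  let A : V → Finset (Fin d → ℤ) := fun v =>
    (Finset.Icc (0 : Fin d → ℤ) (fun _ => (NN : ℤ))).filter
      (fun a => (fun i => (a i).toNat) ∈ W v)
  have hA : ∀ v a, a ∈ A v ↔ (∀ i, 0 ≤ a i) ∧ (∀ i, a i ≤ NN) ∧ (fun i => (a i).toNat) ∈ W v := by
    intro v a
    simp [A, Finset.mem_Icc, Pi.le_def, and_assoc]
  -- capping
  have cap : ∀ v (a : Fin d → ℤ), (∃ h c, Reach G σ v₀ h c ∧ c.1 = v ∧
      ∀ i, (b i : ℤ) + c.2 i ≤ a i) → (fun i => min (a i) NN) ∈ A v := by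
    rintro v a ⟨h, c, hr, hc, hle⟩
    have h0 : ∀ i, 0 ≤ a i := fun i => le_trans (hr.energy hσ hwin i) (hle i)
    obtain ⟨m, hm, hma, hmN⟩ := hN v (fun i => (a i).toNat)
      ⟨h, c, hr, hc, fun i => by
        have := hle i; have := h0 i
        show _ ≤ (((a i).toNat : ℕ) : ℤ)
        omega⟩
    obtain ⟨h', c', hr', hc', hle'⟩ := hm
    rw [hA]
    refine ⟨fun i => ?_, fun i => ?_, h', c', hr', hc', fun i => ?_⟩
    · have := h0 i; simp; omega
    · simp
    · have h1 := hle' i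
      have h2 : m i ≤ (a i).toNat := hma i
      have h3 := hmN i
      have h4 := hNN v
      have h5 := h0 i
      show _ ≤ ((min (a i) (NN : ℤ)).toNat : ℤ)
      omega
  -- one step
  have stepcap : ∀ v' (a u : Fin d → ℤ), (∀ i, 0 ≤ a i) → (∀ i, a i ≤ NN) →
      (∀ i, |u i| ≤ (enorm G : ℤ)) → (∃ h c, Reach G σ v₀ h c ∧ c.1 = v' ∧
      ∀ i, (b i : ℤ) + c.2 i ≤ (a + u) i) → ∃ u', u' ≤ u ∧
        (∀ i, |u' i| ≤ (enorm G : ℤ)) ∧ a + u' ∈ A v' := by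
    intro v' a u h0 hn hu hr
    refine ⟨fun i => min (a i + u i) NN - a i, fun i => ?_, fun i => ?_, ?_⟩
    · show min (a i + u i) (NN : ℤ) - a i ≤ u i
      omega
    · have h1 := hu i; have h2 := hn i
      show |min (a i + u i) (NN : ℤ) - a i| ≤ _
      rw [abs_le] at *
      omega
    · have := cap v' (a + u) hr
      convert this using 1
      funext i
      simp
  refine ⟨A, ⟨_, cap v₀ (fun i => b i) ⟨[], _, Reach.init, rfl, fun i => by simp⟩⟩, ?_, ?_⟩
  · intro v hv a ha
    rw [hA] at ha
    obtain ⟨h0, hn, h, c, hr, hc, hle⟩ := ha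
    subst hc
    have he := hσ h c (hr.path hσ) (by simpa using hv)
    obtain ⟨u', h1, h2, h3⟩ := stepcap (σ h c).2 a (σ h c).1 h0 hn (edge_bound G he)
      ⟨_, _, Reach.p1 h c hr hv, rfl, fun i => by
        have h7 : (b i : ℤ) + c.2 i ≤ (((a i).toNat : ℕ) : ℤ) := hle i
        have := h0 i; simp; omega⟩
    exact ⟨_, _, u', he, h1, h2, h3⟩
  · intro v hv a ha u v' he
    rw [hA] at ha
    obtain ⟨h0, hn, h, c, hr, hc, hle⟩ := ha
    subst hc
    exact stepcap v' a u h0 hn (edge_bound G he)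
      ⟨_, _, Reach.p2 h c u v' hr hv he, rfl, fun i => by
        have h7 : (b i : ℤ) + c.2 i ≤ (((a i).toNat : ℕ) : ℤ) := hle i
        have := h0 i; simp; omega⟩

/-! ### Part E: from a state machine to a winning strategy -/

theorem machine (G : MWG V d) (v₀ : V) (S : Type) (vtx : S → V) (y : S → Fin d → ℤ) (s₀ : S)
    (hv0 : vtx s₀ = v₀) (hy0 : y s₀ = 0) (B : ℕ) (hB : ∀ s i, -(B : ℤ) ≤ y s i)
    (h1 : ∀ s, vtx s ∈ G.P1 → ∃ u s', (vtx s, u, vtx s') ∈ G.E ∧ y s' ≤ y s + u)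
    (h2 : ∀ s, vtx s ∉ G.P1 → ∀ u v', (vtx s, u, v') ∈ G.E →
      ∃ s', vtx s' = v' ∧ y s' ≤ y s + u) :
    P1WinsEnergy G (fun _ => B) v₀ := by
  classical
  have h1' : ∀ s, ∃ p : (Fin d → ℤ) × S, vtx s ∈ G.P1 →
      (vtx s, p.1, vtx p.2) ∈ G.E ∧ y p.2 ≤ y s + p.1 := by
    intro s
    by_cases h : vtx s ∈ G.P1
    · obtain ⟨u, s', h⟩ := h1 s h
      exact ⟨(u, s'), fun _ => h⟩
    · exact ⟨(0, s₀), fun h' => absurd h' h⟩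
  have h2' : ∀ s u v', ∃ s', vtx s ∉ G.P1 → (vtx s, u, v') ∈ G.E →
      vtx s' = v' ∧ y s' ≤ y s + u := by
    intro s u v'
    by_cases h : vtx s ∉ G.P1 ∧ (vtx s, u, v') ∈ G.E
    · obtain ⟨s', h'⟩ := h2 s h.1 u v' h.2
      exact ⟨s', fun _ _ => h'⟩
    · exact ⟨s₀, fun a b => absurd ⟨a, b⟩ h⟩
  choose n1 hn1 using h1'
  choose n2 hn2 using h2'
  choose su sv hsuv using G.serial
  -- memory: pair of previous configuration and state
  let upd : S × Conf V d → Conf V d → S × Conf V d := fun p c' =>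
    (if vtx p.1 ∈ G.P1 then (n1 p.1).2 else n2 p.1 (c'.2 - p.2.2) c'.1, c')
  let mem : List (Conf V d) → Conf V d → S := fun h c =>
    match h ++ [c] with
    | [] => s₀
    | c0 :: l => (l.foldl upd (s₀, c0)).1
  let σ : Strat V d := fun h c =>
    if vtx (mem h c) = c.1 ∧ c.1 ∈ G.P1 then ((n1 (mem h c)).1, vtx (n1 (mem h c)).2)
    else (su c.1, sv c.1)
  refine ⟨σ, ?_, ?_⟩
  · intro h c _ hc
    simp only [σ]
    split_ifs with hh
    · have := (hn1 (mem h c) (by rw [hh.1]; exact hh.2)).1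
      rw [hh.1] at this
      exact this
    · exact hsuv c.1
  · intro ρ hρ hcon
    have hfold : ∀ n, ∀ c0 l, hist ρ n ++ [ρ n] = c0 :: l →
        (l.foldl upd (s₀, c0)).2 = ρ n := by
      intro n c0 l hl
      rcases List.eq_nil_or_concat l with h | ⟨l', z, h⟩
      · subst h
        rcases n with _ | n
        · simp [hist] at hl; simp [hl]
        · have := congrArg List.length hl
          simp [hist] at this
      · rw [h] at hl ⊢
        have : hist ρ n ++ [ρ n] = (c0 :: l') ++ [z] := by rw [hl]; simp
        have := List.append_inj_right' this rfl
        simp at this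
        simp [upd, this]
    have hrec : ∀ n, mem (hist ρ (n+1)) (ρ (n+1)) =
        if vtx (mem (hist ρ n) (ρ n)) ∈ G.P1 then (n1 (mem (hist ρ n) (ρ n))).2
        else n2 (mem (hist ρ n) (ρ n)) ((ρ (n+1)).2 - (ρ n).2) (ρ (n+1)).1 := by
      intro n
      obtain ⟨c0, l, hl⟩ : ∃ c0 l, hist ρ n ++ [ρ n] = c0 :: l := by
        cases hh : hist ρ n ++ [ρ n] with
        | nil => simp at hh
        | cons a b => exact ⟨a, b, rfl⟩
      have e2 : hist ρ (n+1) ++ [ρ (n+1)] = c0 :: (l ++ [ρ (n+1)]) := by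
        have : hist ρ (n+1) = hist ρ n ++ [ρ n] := by simp [hist, List.range_succ]
        rw [this, hl]; simp
      have m1 : mem (hist ρ n) (ρ n) = (l.foldl upd (s₀, c0)).1 := by
        simp only [mem, hl]
      have m2 : mem (hist ρ (n+1)) (ρ (n+1)) = ((l ++ [ρ (n+1)]).foldl upd (s₀, c0)).1 := by
        simp only [mem, e2]
      rw [m2, m1, List.foldl_append]
      simp only [List.foldl_cons, List.foldl_nil, upd]
      rw [hfold n c0 l hl]
    have hinv : ∀ n, vtx (mem (hist ρ n) (ρ n)) = (ρ n).1 ∧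
        y (mem (hist ρ n) (ρ n)) ≤ (ρ n).2 := by
      intro n
      induction n with
      | zero =>
        have : mem (hist ρ 0) (ρ 0) = s₀ := by simp [mem, hist]
        rw [this, hv0, hy0, hρ.1]
        simp
      | succ n ih =>
        obtain ⟨ih1, ih2⟩ := ih
        rw [hrec]
        set s := mem (hist ρ n) (ρ n) with hs
        by_cases hp : vtx s ∈ G.P1
        · rw [if_pos hp]
          have hc := hcon n (by rw [← ih1]; exact hp)
          have hσ : σ (hist ρ n) (ρ n) = ((n1 s).1, vtx (n1 s).2) := by
            simp only [σ, ← hs]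
            rw [if_pos ⟨ih1, by rw [← ih1]; exact hp⟩]
          rw [hσ] at hc
          rw [hc]
          refine ⟨rfl, le_trans (hn1 s hp).2 ?_⟩
          exact add_le_add_left ih2 _
        · rw [if_neg hp]
          have hst := hρ.2 n
          unfold Step at hst
          rw [← ih1] at hst
          obtain ⟨a1, a2⟩ := hn2 s _ _ hp hst
          refine ⟨a1, le_trans a2 ?_⟩
          intro i
          have h : y s i ≤ (ρ n).2 i := ih2 i
          simp only [Pi.add_apply, Pi.sub_apply]
          omega
    intro n i
    have a1 : y (mem (hist ρ n) (ρ n)) i ≤ (ρ n).2 i := (hinv n).2 i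
    have a2 : -(B : ℤ) ≤ y (mem (hist ρ n) (ρ n)) i := hB (mem (hist ρ n) (ρ n)) i
    show 0 ≤ (B : ℤ) + _
    omega

end PLB

namespace PLB

open Matrix

/-! ### Part B: small representatives of sign patterns -/

noncomputable def WW (d D : ℕ) : Finset (Fin d → ℤ) := Finset.Icc (fun _ => -(D : ℤ)) (fun _ => (D : ℤ))

theorem mem_WW {D : ℕ} {w : Fin d → ℤ} : w ∈ WW d D ↔ ∀ i, |w i| ≤ (D : ℤ) := by
  simp only [WW, Finset.mem_Icc, Pi.le_def, abs_le]
  exact ⟨fun h i => ⟨h.1 i, h.2 i⟩, fun h => ⟨fun i => (h i).1, fun i => (h i).2⟩⟩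

theorem neg_mem_WW {D : ℕ} {w : Fin d → ℤ} (h : w ∈ WW d D) : -w ∈ WW d D := by
  rw [mem_WW] at *
  intro i; simpa using h i

theorem single_mem_WW {D : ℕ} (hD : 1 ≤ D) (i : Fin d) : (Pi.single i 1 : Fin d → ℤ) ∈ WW d D := by
  rw [mem_WW]
  intro j
  by_cases h : j = i
  · subst h; simp; exact_mod_cast hD
  · simp [h]

def cq (w : Fin d → ℤ) : Fin d → ℚ := fun i => (w i : ℚ)

theorem cq_dot (a b : Fin d → ℤ) : cq a ⬝ᵥ cq b = ((a ⬝ᵥ b : ℤ) : ℚ) := by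
  simp [cq, dotProduct]

theorem cq_neg (a : Fin d → ℤ) : cq (-a) = - cq a := by
  funext i; simp [cq]

def Feas (D : ℕ) (μ : Fin d → ℤ) (y : Fin d → ℚ) : Prop :=
  ∀ w ∈ WW d D, (μ ⬝ᵥ w = 0 → y ⬝ᵥ cq w = 0) ∧ (0 < μ ⬝ᵥ w → 1 ≤ y ⬝ᵥ cq w)

theorem feas_step (D : ℕ) (hD : 1 ≤ D) (μ : Fin d → ℤ) (y : Fin d → ℚ) (hy : Feas D μ y)
    (z : Fin d → ℚ) (hz : z ≠ 0) : ∃ t : ℚ, Feas D μ (y + t • z) ∧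
      ∃ w ∈ WW d D, ∃ e : ℤ, |e| ≤ 1 ∧ z ⬝ᵥ cq w ≠ 0 ∧ (y + t • z) ⬝ᵥ cq w = e := by
  by_cases h0 : ∃ w ∈ WW d D, μ ⬝ᵥ w = 0 ∧ z ⬝ᵥ cq w ≠ 0
  · obtain ⟨w, hw, h1, h2⟩ := h0
    refine ⟨0, by simpa using hy, w, hw, 0, by simp, h2, ?_⟩
    simpa using (hy w hw).1 h1
  · push Not at h0
    obtain ⟨i, hi⟩ : ∃ i, z i ≠ 0 := by
      by_contra h; push Not at h; exact hz (funext h)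
    have hcs : z ⬝ᵥ cq (Pi.single i 1 : Fin d → ℤ) = z i := by
      have : cq (Pi.single i 1 : Fin d → ℤ) = Pi.single i 1 := by
        funext j
        by_cases h : j = i
        · subst h; simp [cq]
        · simp [cq, h]
      rw [this]; simp
    -- some w with mu.w > 0, z.w nonzero
    obtain ⟨w1, hw1, hp1, hz1⟩ : ∃ w ∈ WW d D, 0 < μ ⬝ᵥ w ∧ z ⬝ᵥ cq w ≠ 0 := by
      have hs := single_mem_WW (d := d) hD i
      have hne : μ ⬝ᵥ (Pi.single i 1 : Fin d → ℤ) ≠ 0 := fun h => by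
        have := h0 _ hs h; rw [hcs] at this; exact hi this
      rcases lt_or_gt_of_ne hne with h | h
      · refine ⟨_, neg_mem_WW hs, ?_, ?_⟩
        · rw [dotProduct_neg]; omega
        · rw [cq_neg, dotProduct_neg, hcs]; simpa using hi
      · exact ⟨_, hs, h, by rw [hcs]; exact hi⟩
    have main : ∀ z : Fin d → ℚ, (∀ w ∈ WW d D, μ ⬝ᵥ w = 0 → z ⬝ᵥ cq w = 0) →
        (∃ w ∈ WW d D, 0 < μ ⬝ᵥ w ∧ z ⬝ᵥ cq w < 0) → ∃ t : ℚ, Feas D μ (y + t • z) ∧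
      ∃ w ∈ WW d D, ∃ e : ℤ, |e| ≤ 1 ∧ z ⬝ᵥ cq w ≠ 0 ∧ (y + t • z) ⬝ᵥ cq w = e := by
      intro z h0 hex
      let T := (WW d D).filter (fun w => 0 < μ ⬝ᵥ w ∧ z ⬝ᵥ cq w < 0)
      have hT : T.Nonempty := by
        obtain ⟨w, a, b, c⟩ := hex
        exact ⟨w, by simp [T, a, b, c]⟩
      obtain ⟨w0, hw0, hmin⟩ := Finset.exists_min_image T
        (fun w => (y ⬝ᵥ cq w - 1) / (-(z ⬝ᵥ cq w))) hT
      simp only [T, Finset.mem_filter] at hw0 hmin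
      obtain ⟨a, b, c⟩ := hw0
      set t := (y ⬝ᵥ cq w0 - 1) / (-(z ⬝ᵥ cq w0)) with ht
      have ht0 : 0 ≤ t := by
        have := (hy w0 a).2 b
        apply div_nonneg <;> linarith
      refine ⟨t, ?_, w0, a, 1, by simp, c.ne, ?_⟩
      · intro w hw
        refine ⟨fun h => ?_, fun h => ?_⟩
        · rw [add_dotProduct, smul_dotProduct, (hy w hw).1 h, h0 w hw h]; simp
        · rw [add_dotProduct, smul_dotProduct, smul_eq_mul]
          have h1 := (hy w hw).2 h
          rcases lt_or_ge (z ⬝ᵥ cq w) 0 with h2 | h2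
          · have h3 := hmin w ⟨hw, h, h2⟩
            rw [le_div_iff₀ (by linarith)] at h3
            linarith
          · have := mul_nonneg ht0 h2
            linarith
      · rw [add_dotProduct, smul_dotProduct, smul_eq_mul]
        have : t * (-(z ⬝ᵥ cq w0)) = y ⬝ᵥ cq w0 - 1 := by
          rw [ht]; apply div_mul_cancel₀; linarith
        push_cast
        linarith
    rcases lt_or_gt_of_ne hz1 with h | h
    · exact main z h0 ⟨w1, hw1, hp1, h⟩
    · obtain ⟨t, h1, w, h2, e, h3, h4, h5⟩ := main (-z)
        (fun w hw h => by rw [neg_dotProduct, h0 w hw h]; simp)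
        ⟨w1, hw1, hp1, by rw [neg_dotProduct]; linarith⟩
      refine ⟨-t, ?_, w, h2, e, h3, ?_, ?_⟩
      · simpa using h1
      · simpa using h4
      · simpa using h5

theorem feas_indep (D : ℕ) (hD : 1 ≤ D) (μ : Fin d → ℤ) (k : ℕ) (hk : k ≤ d) :
    ∃ y : Fin d → ℚ, Feas D μ y ∧ ∃ f : Fin k → Fin d → ℤ, (∀ j, f j ∈ WW d D) ∧
      LinearIndependent ℚ (fun j => cq (f j)) ∧
      ∃ e : Fin k → ℤ, (∀ j, |e j| ≤ 1) ∧ ∀ j, y ⬝ᵥ cq (f j) = e j := by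
  induction k with
  | zero =>
    refine ⟨cq μ, ?_, Fin.elim0, fun j => j.elim0, linearIndependent_empty_type, Fin.elim0,
      fun j => j.elim0, fun j => j.elim0⟩
    intro w hw
    rw [cq_dot]
    refine ⟨fun h => by rw [h]; simp, fun h => ?_⟩
    exact_mod_cast h
  | succ k ih =>
    obtain ⟨y, hy, f, hf, hli, e, he, hye⟩ := ih (by omega)
    let A : Matrix (Fin k) (Fin d) ℚ := Matrix.of (fun j => cq (f j))
    have hker : LinearMap.ker A.mulVecLin ≠ ⊥ := by
      apply LinearMap.ker_ne_bot_of_finrank_lt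
      simp; omega
    obtain ⟨z, hz, hz0⟩ := (Submodule.ne_bot_iff _).1 hker
    have hzf : ∀ j, z ⬝ᵥ cq (f j) = 0 := by
      intro j
      have : A.mulVecLin z = 0 := hz
      have := congrFun this j
      rw [dotProduct_comm]
      simpa [A, Matrix.mulVecLin_apply, Matrix.mulVec] using this
    obtain ⟨t, ht, w, hw, e0, he0, hzw, hyw⟩ := feas_step D hD μ y hy z hz0
    refine ⟨_, ht, Fin.cons w f, ?_, ?_, Fin.cons e0 e, ?_, ?_⟩
    · intro j
      refine Fin.cases ?_ ?_ j
      · simpa using hw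
      · intro j; simpa using hf j
    · have : (fun j => cq ((Fin.cons w f : Fin (k+1) → Fin d → ℤ) j)) =
          Fin.cons (cq w) (fun j => cq (f j)) := by
        funext j
        refine Fin.cases ?_ ?_ j
        · simp
        · intro j; simp
      rw [this]
      apply LinearIndependent.finCons hli
      intro hmem
      apply hzw
      refine Submodule.span_induction (p := fun x _ => z ⬝ᵥ x = 0) ?_ ?_ ?_ ?_ hmem
      · rintro x ⟨j, rfl⟩; exact hzf j
      · simp
      · intro x y _ _ hx hy; rw [dotProduct_add, hx, hy]; simp
      · intro a x _ hx; rw [dotProduct_smul, hx]; simp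
    · intro j
      refine Fin.cases ?_ ?_ j
      · simpa using he0
      · intro j; simpa using he j
    · intro j
      refine Fin.cases ?_ ?_ j
      · simpa using hyw
      · intro j
        simp only [Fin.cons_succ]
        rw [add_dotProduct, smul_dotProduct, hzf, hye]; simp

def SameSign (D : ℕ) (μ ν : Fin d → ℤ) : Prop :=
  ∀ w ∈ WW d D, (μ ⬝ᵥ w).sign = (ν ⬝ᵥ w).sign

def Small (D : ℕ) (ν : Fin d → ℤ) : Prop := ∀ i, |ν i| ≤ ((d.factorial * D ^ d : ℕ) : ℤ)

theorem small_rep (D : ℕ) (hD : 1 ≤ D) (μ : Fin d → ℤ) :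
    ∃ ν : Fin d → ℤ, Small D ν ∧ SameSign D μ ν := by
  obtain ⟨y, hy, f, hf, hli, e, he, hye⟩ := feas_indep D hD μ d le_rfl
  let A : Matrix (Fin d) (Fin d) ℤ := Matrix.of f
  let Aq : Matrix (Fin d) (Fin d) ℚ := A.map (Int.castRingHom ℚ)
  have hAq : LinearIndependent ℚ Aq.row := by
    have : Aq.row = fun j => cq (f j) := by
      funext j i; simp [Aq, A, cq, Matrix.row]
    rw [this]; exact hli
  have hunit : IsUnit Aq := Matrix.linearIndependent_rows_iff_isUnit.1 hAq
  have hdet : Aq.det ≠ 0 := by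
    have := (Matrix.isUnit_iff_isUnit_det Aq).1 hunit
    exact this.ne_zero
  have hdet2 : Aq.det = (A.det : ℚ) := by
    have := (RingHom.map_det (Int.castRingHom ℚ) A)
    simpa [Aq] using this.symm
  have hAy : Aq *ᵥ y = cq e := by
    funext j
    have := hye j
    rw [dotProduct_comm] at this
    simp only [Matrix.mulVec]
    exact this
  have hcr : cq (A.cramer e) = Aq.det • y := by
    have h1 : cq (A.cramer e) = Aq.cramer (cq e) := by
      funext i
      simp only [cq, Matrix.cramer_apply]
      have := RingHom.map_det (Int.castRingHom ℚ) (A.updateCol i e)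
      simp only [eq_intCast] at this
      rw [this]
      congr 1
      ext a b
      by_cases h : b = i
      · subst h; simp [cq]
      · simp [h, Aq]
    rw [h1, ← hAy, Matrix.cramer_eq_adjugate_mulVec, Matrix.mulVec_mulVec, Matrix.adjugate_mul,
      Matrix.smul_mulVec, Matrix.one_mulVec]
  refine ⟨A.det.sign • A.cramer e, ?_, ?_⟩
  · intro i
    rw [Pi.smul_apply, smul_eq_mul, abs_mul]
    have h1 : |A.det.sign| ≤ 1 := by
      rcases Int.sign_trichotomy A.det with h | h | h <;> rw [h] <;> simp
    have h2 : |A.cramer e i| ≤ ((d.factorial * D ^ d : ℕ) : ℤ) := by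
      rw [Matrix.cramer_apply]
      have := Matrix.det_le (A := A.updateCol i e) (abv := AbsoluteValue.abs) (x := (D : ℤ)) (by
        intro a b
        show |_| ≤ _
        by_cases h : b = i
        · subst h; simp
          exact (he a).trans (by exact_mod_cast hD)
        · simp [h, A]
          exact mem_WW.1 (hf a) b)
      simpa using this
    calc |A.det.sign| * |A.cramer e i| ≤ 1 * |A.cramer e i| := by gcongr
      _ ≤ _ := by simpa using h2
  · -- signs
    have key : ∀ w, (((A.det.sign • A.cramer e) ⬝ᵥ w : ℤ) : ℚ) = |Aq.det| * (y ⬝ᵥ cq w) := by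
      intro w
      rw [← cq_dot]
      have : cq (A.det.sign • A.cramer e) = (A.det.sign : ℚ) • cq (A.cramer e) := by
        funext i; simp [cq]
      rw [this, hcr, smul_smul, smul_dotProduct, smul_eq_mul, hdet2]
      congr 1
      have := Int.sign_mul_self_eq_abs A.det
      exact_mod_cast this
    have hpos : 0 < |Aq.det| := abs_pos.2 hdet
    have P : ∀ w ∈ WW d D, 0 < μ ⬝ᵥ w → 0 < (A.det.sign • A.cramer e) ⬝ᵥ w := by
      intro w hw h
      have h1 := (hy w hw).2 h
      have : (0 : ℚ) < (((A.det.sign • A.cramer e) ⬝ᵥ w : ℤ) : ℚ) := by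
        rw [key]; apply mul_pos hpos; linarith
      exact_mod_cast this
    intro w hw
    rcases lt_trichotomy (μ ⬝ᵥ w) 0 with h | h | h
    · have := P (-w) (neg_mem_WW hw) (by rw [dotProduct_neg]; omega)
      rw [dotProduct_neg] at this
      rw [Int.sign_eq_neg_one_of_neg h, Int.sign_eq_neg_one_of_neg (by omega)]
    · have h1 := (hy w hw).1 h
      have : (((A.det.sign • A.cramer e) ⬝ᵥ w : ℤ) : ℚ) = 0 := by
        rw [key, h1]; simp
      have : (A.det.sign • A.cramer e) ⬝ᵥ w = 0 := by exact_mod_cast this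
      rw [h, this]
    · rw [Int.sign_eq_one_of_pos h, Int.sign_eq_one_of_pos (P w hw h)]

end PLB

namespace PLB

open Matrix

/-! ### Part C: the geometry of sign patterns -/

noncomputable def MM (d D : ℕ) : ℤ := ((d * (d.factorial * D ^ d) * D : ℕ) : ℤ)

theorem Small.dot {D : ℕ} {ν : Fin d → ℤ} (h : Small D ν) {w : Fin d → ℤ} (hw : w ∈ WW d D) :
    |ν ⬝ᵥ w| ≤ MM d D := by
  unfold dotProduct
  calc |∑ i, ν i * w i| ≤ ∑ i, |ν i * w i| := Finset.abs_sum_le_sum_abs _ _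
    _ ≤ ∑ _i : Fin d, ((d.factorial * D ^ d : ℕ) : ℤ) * D := by
        apply Finset.sum_le_sum
        intro i _
        rw [abs_mul]
        exact mul_le_mul (h i) (mem_WW.1 hw i) (abs_nonneg _) (by positivity)
    _ = MM d D := by simp [MM]; ring

theorem SameSign.symm {D : ℕ} {μ ν : Fin d → ℤ} (h : SameSign D μ ν) : SameSign D ν μ :=
  fun w hw => (h w hw).symm

theorem SameSign.trans {D : ℕ} {μ ν κ : Fin d → ℤ} (h : SameSign D μ ν) (h' : SameSign D ν κ) :
    SameSign D μ κ := fun w hw => (h w hw).trans (h' w hw)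

noncomputable def rep (D : ℕ) (μ : Fin d → ℤ) : Fin d → ℤ :=
  Classical.epsilon (fun ν => Small D ν ∧ SameSign D μ ν)

theorem rep_spec {D : ℕ} (hD : 1 ≤ D) (μ : Fin d → ℤ) : Small D (rep D μ) ∧ SameSign D μ (rep D μ) :=
  Classical.epsilon_spec (p := fun ν => Small D ν ∧ SameSign D μ ν) (small_rep D hD μ)

theorem rep_congr {D : ℕ} {μ ν : Fin d → ℤ} (h : SameSign D μ ν) : rep D μ = rep D ν := by
  unfold rep
  congr 1
  funext κ
  apply propext
  exact ⟨fun a => ⟨a.1, h.symm.trans a.2⟩, fun a => ⟨a.1, h.trans a.2⟩⟩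

theorem SameSign.pos {D : ℕ} {μ ν : Fin d → ℤ} (h : SameSign D μ ν) {w : Fin d → ℤ}
    (hw : w ∈ WW d D) : 0 < μ ⬝ᵥ w ↔ 0 < ν ⬝ᵥ w := by
  rw [← Int.sign_eq_one_iff_pos, ← Int.sign_eq_one_iff_pos, h w hw]

theorem SameSign.zero {D : ℕ} {μ ν : Fin d → ℤ} (h : SameSign D μ ν) {w : Fin d → ℤ}
    (hw : w ∈ WW d D) : μ ⬝ᵥ w = 0 ↔ ν ⬝ᵥ w = 0 := by
  rw [← Int.sign_eq_zero_iff_zero, h w hw, Int.sign_eq_zero_iff_zero]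

theorem exists_pos {D : ℕ} (hD : 1 ≤ D) {μ : Fin d → ℤ} (h : μ ≠ 0) :
    ∃ w ∈ WW d D, 0 < μ ⬝ᵥ w := by
  obtain ⟨i, hi⟩ : ∃ i, μ i ≠ 0 := by
    by_contra h'; push Not at h'; exact h (funext h')
  have hs := single_mem_WW (d := d) hD i
  rcases lt_or_gt_of_ne hi with h | h
  · exact ⟨_, neg_mem_WW hs, by simpa using h⟩
  · exact ⟨_, hs, by simpa using h⟩

open Classical in
noncomputable def CC (d D : ℕ) : Finset (Fin d → ℤ) :=
  (Finset.Icc (fun _ => -((d.factorial * D ^ d : ℕ) : ℤ))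
    (fun _ => ((d.factorial * D ^ d : ℕ) : ℤ))).filter (fun ν => ν ≠ 0 ∧ rep D ν = ν)

theorem mem_CC {D : ℕ} (hD : 1 ≤ D) {ν : Fin d → ℤ} : ν ∈ CC d D ↔ ν ≠ 0 ∧ rep D ν = ν := by
  unfold CC
  rw [Finset.mem_filter]
  refine ⟨fun h => h.2, fun h => ⟨?_, h⟩⟩
  have h1 := (rep_spec hD ν).1
  rw [h.2] at h1
  rw [Finset.mem_Icc]
  exact ⟨fun i => (abs_le.1 (h1 i)).1, fun i => (abs_le.1 (h1 i)).2⟩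

theorem CC_small {D : ℕ} (hD : 1 ≤ D) {ν : Fin d → ℤ} (h : ν ∈ CC d D) : Small D ν := by
  have h1 := (rep_spec hD ν).1
  rwa [((mem_CC hD).1 h).2] at h1

theorem CC_dot {D : ℕ} (hD : 1 ≤ D) {ν : Fin d → ℤ} (h : ν ∈ CC d D) {w : Fin d → ℤ}
    (hw : w ∈ WW d D) : |ν ⬝ᵥ w| ≤ MM d D := (CC_small hD h).dot hw

theorem rep_mem {D : ℕ} (hD : 1 ≤ D) {μ : Fin d → ℤ} (h : μ ≠ 0) : rep D μ ∈ CC d D := by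
  rw [mem_CC hD]
  refine ⟨?_, (rep_congr (rep_spec hD μ).2).symm⟩
  intro h0
  obtain ⟨w, hw, hp⟩ := exists_pos hD h
  have := ((rep_spec hD μ).2.pos hw).1 hp
  rw [h0] at this
  simp at this

theorem CC_eq {D : ℕ} (hD : 1 ≤ D) {ν κ : Fin d → ℤ} (h : ν ∈ CC d D) (h' : κ ∈ CC d D)
    (hs : SameSign D ν κ) : ν = κ := by
  rw [← ((mem_CC hD).1 h).2, ← ((mem_CC hD).1 h').2, rep_congr hs]

def Le (D : ℕ) (τ σ : Fin d → ℤ) : Prop := ∀ w ∈ WW d D, 0 < τ ⬝ᵥ w → 0 < σ ⬝ᵥ w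

theorem Le.refl (D : ℕ) (τ : Fin d → ℤ) : Le D τ τ := fun _ _ h => h

theorem Le.trans {D : ℕ} {a b c : Fin d → ℤ} (h : Le D a b) (h' : Le D b c) : Le D a c :=
  fun w hw hp => h' w hw (h w hw hp)

theorem Le.neg {D : ℕ} {τ σ : Fin d → ℤ} (h : Le D τ σ) {w : Fin d → ℤ} (hw : w ∈ WW d D)
    (hn : τ ⬝ᵥ w < 0) : σ ⬝ᵥ w < 0 := by
  have := h (-w) (neg_mem_WW hw) (by rw [dotProduct_neg]; omega)
  rw [dotProduct_neg] at this; omega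

theorem Le.zero {D : ℕ} {τ σ : Fin d → ℤ} (h : Le D τ σ) {w : Fin d → ℤ} (hw : w ∈ WW d D)
    (hn : σ ⬝ᵥ w = 0) : τ ⬝ᵥ w = 0 := by
  rcases lt_trichotomy (τ ⬝ᵥ w) 0 with h1 | h1 | h1
  · have := h.neg hw h1; omega
  · exact h1
  · have := h w hw h1; omega

noncomputable def rk (D : ℕ) (τ : Fin d → ℤ) : ℕ :=
  Module.finrank ℚ (Submodule.span ℚ (cq '' {w | w ∈ WW d D ∧ τ ⬝ᵥ w = 0}))

theorem rk_le (D : ℕ) (τ : Fin d → ℤ) : rk D τ ≤ d := by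
  unfold rk
  have := Submodule.finrank_le (Submodule.span ℚ (cq '' {w | w ∈ WW d D ∧ τ ⬝ᵥ w = 0}))
  simpa using this

theorem rk_congr {D : ℕ} {τ σ : Fin d → ℤ} (h : SameSign D τ σ) : rk D τ = rk D σ := by
  unfold rk
  have : {w | w ∈ WW d D ∧ τ ⬝ᵥ w = 0} = {w | w ∈ WW d D ∧ σ ⬝ᵥ w = 0} := by
    ext w
    simp only [Set.mem_ofPred_eq]
    constructor
    · rintro ⟨a, b⟩; exact ⟨a, (h.zero a).1 b⟩
    · rintro ⟨a, b⟩; exact ⟨a, (h.zero a).2 b⟩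
  rw [this]

theorem rk_lt {D : ℕ} {τ σ : Fin d → ℤ} (h : ∀ w ∈ WW d D, σ ⬝ᵥ w = 0 → τ ⬝ᵥ w = 0)
    (h' : ∃ w ∈ WW d D, τ ⬝ᵥ w = 0 ∧ σ ⬝ᵥ w ≠ 0) : rk D σ < rk D τ := by
  obtain ⟨w, hw, h1, h2⟩ := h'
  unfold rk
  apply Submodule.finrank_lt_finrank_of_lt
  apply lt_of_le_of_ne
  · apply Submodule.span_mono
    apply Set.image_mono
    rintro w ⟨a, b⟩; exact ⟨a, h w a b⟩
  · intro heq
    have hmem : cq w ∈ Submodule.span ℚ (cq '' {w | w ∈ WW d D ∧ σ ⬝ᵥ w = 0}) := by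
      rw [heq]
      exact Submodule.subset_span ⟨w, ⟨hw, h1⟩, rfl⟩
    have : cq σ ⬝ᵥ cq w = 0 := by
      refine Submodule.span_induction (p := fun x _ => cq σ ⬝ᵥ x = 0) ?_ ?_ ?_ ?_ hmem
      · rintro x ⟨j, ⟨_, hj⟩, rfl⟩; rw [cq_dot, hj]; simp
      · simp
      · intro x y _ _ hx hy; rw [dotProduct_add, hx, hy]; simp
      · intro a x _ hx; rw [dotProduct_smul, hx]; simp
    rw [cq_dot] at this
    exact h2 (by exact_mod_cast this)

theorem Le.rk_lt {D : ℕ} (hD : 1 ≤ D) {τ σ : Fin d → ℤ} (h : Le D τ σ) (hτ : τ ∈ CC d D)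
    (hσ : σ ∈ CC d D) (hne : τ ≠ σ) : rk D σ < rk D τ := by
  apply PLB.rk_lt
  · intro w hw h1; exact h.zero hw h1
  · by_contra hc
    push Not at hc
    apply hne
    apply CC_eq hD hτ hσ
    intro w hw
    rcases lt_trichotomy (τ ⬝ᵥ w) 0 with h1 | h1 | h1
    · rw [Int.sign_eq_neg_one_of_neg h1, Int.sign_eq_neg_one_of_neg (h.neg hw h1)]
    · rw [h1, hc w hw h1]
    · rw [Int.sign_eq_one_of_pos h1, Int.sign_eq_one_of_pos (h w hw h1)]

noncomputable def lev (D : ℕ) (τ : Fin d → ℤ) : ℕ := d - rk D τ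

theorem lev_le (D : ℕ) (τ : Fin d → ℤ) : lev D τ ≤ d := by unfold lev; omega

theorem lev_lt {D : ℕ} {τ σ : Fin d → ℤ} (h : rk D σ < rk D τ) : lev D τ < lev D σ := by
  have := rk_le D τ
  unfold lev; omega

noncomputable def hf (D : ℕ) (μ : Fin d → ℤ) : ℤ := ∑ w ∈ WW d D, |μ ⬝ᵥ w|

theorem hf_pos {D : ℕ} (hD : 1 ≤ D) {μ : Fin d → ℤ} (h : μ ≠ 0) : 1 ≤ hf D μ := by
  obtain ⟨w, hw, hp⟩ := exists_pos hD h
  have : |μ ⬝ᵥ w| ≤ hf D μ :=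
    Finset.single_le_sum (f := fun w => |μ ⬝ᵥ w|) (fun _ _ => abs_nonneg _) hw
  have := le_abs_self (μ ⬝ᵥ w)
  omega

theorem abs_comb {m v p q : ℤ} (hs : m.sign = v.sign) (hq : 0 ≤ q) (hp : 0 ≤ p)
    (h : |v| * p ≤ |m| * q) : q * |m| = p * |v| + |q * m - p * v| := by
  rcases lt_trichotomy m 0 with h1 | h1 | h1
  · rw [Int.sign_eq_neg_one_of_neg h1] at hs
    have hv : v < 0 := Int.sign_eq_neg_one_iff_neg.1 hs.symm
    rw [abs_of_neg h1, abs_of_neg hv] at *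
    rw [abs_of_nonpos (by nlinarith)]; ring
  · rw [h1] at hs
    have hv : v = 0 := Int.sign_eq_zero_iff_zero.1 (by simpa using hs.symm)
    simp [h1, hv]
  · rw [Int.sign_eq_one_of_pos h1] at hs
    have hv : 0 < v := Int.sign_eq_one_iff_pos.1 hs.symm
    rw [abs_of_pos h1, abs_of_pos hv] at *
    rw [abs_of_nonneg (by nlinarith)]; ring

theorem single_step {D : ℕ} (hD : 1 ≤ D) {μ : Fin d → ℤ} (hμ : μ ≠ 0) {Qb : ℤ}
    (hQ : ∀ w ∈ WW d D, |μ ⬝ᵥ w| ≤ Qb) :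
    ∃ (p q : ℤ) (μ'' : Fin d → ℤ), 1 ≤ q ∧ q ≤ MM d D ∧ 1 ≤ p ∧ p ≤ q * Qb ∧
      q • μ = p • rep D μ + μ'' ∧ q * hf D μ = p * hf D (rep D μ) + hf D μ'' ∧
      lev D μ'' < lev D μ ∧ ∀ w ∈ WW d D, |μ'' ⬝ᵥ w| ≤ q * Qb := by
  obtain ⟨hsm, hss⟩ := rep_spec hD μ
  set ν := rep D μ with hν
  let T := (WW d D).filter (fun w => ν ⬝ᵥ w ≠ 0)
  have hT : T.Nonempty := by
    obtain ⟨w, hw, hp⟩ := exists_pos hD hμ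
    exact ⟨w, by simp only [T, Finset.mem_filter]; exact ⟨hw, ((hss.pos hw).1 hp).ne'⟩⟩
  obtain ⟨w0, hw0, hmin⟩ := Finset.exists_min_image T
    (fun w => ((|μ ⬝ᵥ w| : ℤ) : ℚ) / ((|ν ⬝ᵥ w| : ℤ) : ℚ)) hT
  simp only [T, Finset.mem_filter] at hw0 hmin
  obtain ⟨hw0, hn0⟩ := hw0
  have hq1 : 0 < |ν ⬝ᵥ w0| := abs_pos.2 hn0
  have hp1 : 0 < |μ ⬝ᵥ w0| := abs_pos.2 (fun h => hn0 ((hss.zero hw0).1 h))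
  have hall : ∀ w ∈ WW d D, |ν ⬝ᵥ w| * |μ ⬝ᵥ w0| ≤ |μ ⬝ᵥ w| * |ν ⬝ᵥ w0| := by
    intro w hw
    by_cases h : ν ⬝ᵥ w = 0
    · rw [h, abs_zero, zero_mul]; positivity
    · have h1 := hmin w ⟨hw, h⟩
      have a1 : (0 : ℚ) < ((|ν ⬝ᵥ w| : ℤ) : ℚ) := by exact_mod_cast abs_pos.2 h
      have a2 : (0 : ℚ) < ((|ν ⬝ᵥ w0| : ℤ) : ℚ) := by exact_mod_cast hq1
      rw [div_le_div_iff₀ a2 a1] at h1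
      have h2 : |μ ⬝ᵥ w0| * |ν ⬝ᵥ w| ≤ |μ ⬝ᵥ w| * |ν ⬝ᵥ w0| := by exact_mod_cast h1
      linarith
  have hdot : ∀ w, (|ν ⬝ᵥ w0| • μ - |μ ⬝ᵥ w0| • ν) ⬝ᵥ w
      = |ν ⬝ᵥ w0| * (μ ⬝ᵥ w) - |μ ⬝ᵥ w0| * (ν ⬝ᵥ w) := by
    intro w
    rw [sub_dotProduct, smul_dotProduct, smul_dotProduct, smul_eq_mul, smul_eq_mul]
  have hcomb : ∀ w ∈ WW d D, |ν ⬝ᵥ w0| * |μ ⬝ᵥ w| = |μ ⬝ᵥ w0| * |ν ⬝ᵥ w| +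
      |(|ν ⬝ᵥ w0| • μ - |μ ⬝ᵥ w0| • ν) ⬝ᵥ w| := by
    intro w hw
    rw [hdot]
    exact abs_comb (hss w hw) hq1.le hp1.le (hall w hw)
  refine ⟨|μ ⬝ᵥ w0|, |ν ⬝ᵥ w0|, |ν ⬝ᵥ w0| • μ - |μ ⬝ᵥ w0| • ν, hq1, hsm.dot hw0, hp1, ?_,
    by abel, ?_, ?_, ?_⟩
  · have := hQ w0 hw0
    nlinarith
  · unfold hf
    rw [Finset.mul_sum, Finset.mul_sum, ← Finset.sum_add_distrib]
    exact Finset.sum_congr rfl hcomb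
  · apply lev_lt
    apply rk_lt
    · intro w hw h
      rw [hdot, h, (hss.zero hw).1 h]; simp
    · refine ⟨w0, hw0, ?_, fun h => hn0 ((hss.zero hw0).1 h)⟩
      have h1 := hcomb w0 hw0
      have : |(|ν ⬝ᵥ w0| • μ - |μ ⬝ᵥ w0| • ν) ⬝ᵥ w0| = 0 := by linarith
      exact abs_eq_zero.1 this
  · intro w hw
    have h1 := hcomb w hw
    have h2 := hQ w hw
    have h3 : 0 ≤ |μ ⬝ᵥ w0| * |ν ⬝ᵥ w| := by positivity
    nlinarith

theorem dec {D : ℕ} (hD : 1 ≤ D) (R L' : ℤ) (hL : 0 ≤ L') (x : Fin d → ℤ)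
    (hx : ∀ ν ∈ CC d D, ν ⬝ᵥ x ≤ R * hf D ν + L') (k : ℕ) :
    ∀ (μ : Fin d → ℤ) (Qb : ℤ), 0 ≤ Qb → lev D μ < k → (∀ w ∈ WW d D, |μ ⬝ᵥ w| ≤ Qb) →
      μ ⬝ᵥ x ≤ R * hf D μ + Qb * k * L' := by
  induction k with
  | zero => intro μ Qb _ h; omega
  | succ k ih =>
    intro μ Qb hQ0 hlev hQ
    by_cases hμ : μ = 0
    · subst hμ
      simp [hf]; positivity
    · obtain ⟨p, q, μ'', h1, h2, h3, h4, h5, h6, h7, h8⟩ := single_step hD hμ hQ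
      have i1 := ih μ'' (q * Qb) (by positivity) (by omega) h8
      have i2 := hx _ (rep_mem hD hμ)
      have i3 := congrArg (· ⬝ᵥ x) h5
      simp only [smul_dotProduct, add_dotProduct, smul_eq_mul] at i3
      have i4 : p * (rep D μ ⬝ᵥ x) ≤ p * (R * hf D (rep D μ) + L') := by gcongr
      have i5 : p * L' ≤ q * Qb * L' := by gcongr
      have i6 : q * (μ ⬝ᵥ x) ≤ q * (R * hf D μ + Qb * (k + 1 : ℕ) * L') := by
        have : q * (R * hf D μ) = p * (R * hf D (rep D μ)) + R * hf D μ'' := by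
          linear_combination R * h6
        push_cast
        nlinarith
      exact le_of_mul_le_mul_left i6 (by omega)

theorem dec' {D : ℕ} (hD : 1 ≤ D) (R L' : ℤ) (hL : 0 ≤ L') (δ : ℕ → ℤ) (hδ : ∀ k, 0 ≤ δ k)
    (x : Fin d → ℤ)
    (hx : ∀ ν ∈ CC d D, ν ⬝ᵥ x ≤ R * hf D ν - δ (lev D ν) + L')
    (μ : Fin d → ℤ) (hμ : μ ≠ 0) (Qb Y : ℤ) (hQ0 : 0 ≤ Qb) (hY : 0 ≤ Y)
    (hYδ : MM d D * Y ≤ δ (lev D μ)) (hQ : ∀ w ∈ WW d D, |μ ⬝ᵥ w| ≤ Qb) :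
    μ ⬝ᵥ x ≤ R * hf D μ - Y + Qb * (d + 2) * L' := by
  obtain ⟨p, q, μ'', h1, h2, h3, h4, h5, h6, h7, h8⟩ := single_step hD hμ hQ
  have i1 := dec hD R L' hL x (fun ν hν => by have := hx ν hν; have := hδ (lev D ν); linarith)
    (d + 1) μ'' (q * Qb) (by positivity) (by have := lev_le D μ''; omega) h8
  have i2 := hx _ (rep_mem hD hμ)
  have hlev : lev D (rep D μ) = lev D μ := by
    unfold lev; rw [rk_congr (rep_spec hD μ).2]
  rw [hlev] at i2
  have i3 := congrArg (· ⬝ᵥ x) h5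
  simp only [smul_dotProduct, add_dotProduct, smul_eq_mul] at i3
  have i4 : p * (rep D μ ⬝ᵥ x) ≤ p * (R * hf D (rep D μ) - δ (lev D μ) + L') := by gcongr
  have i5 : p * L' ≤ q * Qb * L' := by gcongr
  have i7 : q * Y ≤ MM d D * Y := by gcongr
  have i8 : δ (lev D μ) ≤ p * δ (lev D μ) := by
    have := hδ (lev D μ)
    nlinarith
  have i6 : q * (μ ⬝ᵥ x) ≤ q * (R * hf D μ - Y + Qb * (d + 2) * L') := by
    have : q * (R * hf D μ) = p * (R * hf D (rep D μ)) + R * hf D μ'' := by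
      linear_combination R * h6
    push_cast at i1
    nlinarith
  exact le_of_mul_le_mul_left i6 (by omega)

theorem chain_lemma {D : ℕ} (hD : 1 ≤ D) (R L' H' G0 : ℤ) (hL : 0 ≤ L') (hH : 0 ≤ H')
    (hG : 2 * H' + 2 * MM d D * (d + 2) * L' < G0) (δ : ℕ → ℤ)
    (hδ0 : ∀ k, G0 ≤ δ k) (hδ : ∀ j k, j < k → 3 * MM d D * δ j ≤ δ k)
    (hR : ∀ k, k ≤ d → δ k + G0 ≤ R)
    (x : Fin d → ℤ) (hx : ∀ ν ∈ CC d D, ν ⬝ᵥ x ≤ R * hf D ν - δ (lev D ν) + L')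
    {τ τ' : Fin d → ℤ} (hτ : τ ∈ CC d D) (hτ' : τ' ∈ CC d D)
    (h1 : R * hf D τ - δ (lev D τ) - H' ≤ τ ⬝ᵥ x)
    (h2 : R * hf D τ' - δ (lev D τ') - H' ≤ τ' ⬝ᵥ x) : Le D τ τ' ∨ Le D τ' τ := by
  have hM : 0 ≤ MM d D := by unfold MM; positivity
  have hG0 : 0 < G0 := lt_of_le_of_lt (by positivity) hG
  have hδn : ∀ k, 0 ≤ δ k := fun k => le_trans hG0.le (hδ0 k)
  have hQ : ∀ w ∈ WW d D, |(τ + τ') ⬝ᵥ w| ≤ 2 * MM d D := by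
    intro w hw
    rw [add_dotProduct]
    have := abs_add_le (τ ⬝ᵥ w) (τ' ⬝ᵥ w)
    have := CC_dot hD hτ hw
    have := CC_dot hD hτ' hw
    omega
  have hdx : (τ + τ') ⬝ᵥ x = τ ⬝ᵥ x + τ' ⬝ᵥ x := add_dotProduct _ _ _
  by_cases hsep : ∃ w ∈ WW d D, 0 < τ ⬝ᵥ w ∧ τ' ⬝ᵥ w < 0
  · exfalso
    obtain ⟨w, hw, ha, hb⟩ := hsep
    have hh : hf D (τ + τ') + 2 ≤ hf D τ + hf D τ' := by
      unfold hf
      rw [← Finset.sum_add_distrib, ← Finset.add_sum_erase _ _ hw,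
        ← Finset.add_sum_erase (WW d D) (fun w => |τ ⬝ᵥ w| + |τ' ⬝ᵥ w|) hw]
      have s1 : ∑ x ∈ (WW d D).erase w, |(τ + τ') ⬝ᵥ x| ≤
          ∑ x ∈ (WW d D).erase w, (|τ ⬝ᵥ x| + |τ' ⬝ᵥ x|) := by
        apply Finset.sum_le_sum
        intro w _
        rw [add_dotProduct]; exact abs_add_le _ _
      have s2 : |(τ + τ') ⬝ᵥ w| + 2 ≤ |τ ⬝ᵥ w| + |τ' ⬝ᵥ w| := by
        rw [add_dotProduct, abs_of_pos ha, abs_of_neg hb]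
        rcases abs_cases (τ ⬝ᵥ w + τ' ⬝ᵥ w) with ⟨h, _⟩ | ⟨h, _⟩ <;> omega
      linarith
    have i1 := dec hD R L' hL x (fun ν hν => by have := hx ν hν; have := hδn (lev D ν); linarith)
      (d + 1) (τ + τ') (2 * MM d D) (by positivity) (by have := lev_le D (τ + τ'); omega) hQ
    have i2 := hR _ (lev_le D τ)
    have i3 := hR _ (lev_le D τ')
    have hRp : 0 ≤ R := by have := hδn (lev D τ); linarith
    have i4 : R * (hf D (τ + τ') + 2) ≤ R * (hf D τ + hf D τ') := by gcongr
    have i5 : 0 ≤ MM d D * L' := by positivity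
    push_cast at i1
    nlinarith
  · push Not at hsep
    have hsep' : ∀ w ∈ WW d D, 0 < τ' ⬝ᵥ w → 0 ≤ τ ⬝ᵥ w := by
      intro w hw h
      by_contra hc
      have := hsep (-w) (neg_mem_WW hw) (by rw [dotProduct_neg]; omega)
      rw [dotProduct_neg] at this
      omega
    have hadd : hf D (τ + τ') = hf D τ + hf D τ' := by
      unfold hf
      rw [← Finset.sum_add_distrib]
      apply Finset.sum_congr rfl
      intro w hw
      rw [add_dotProduct]
      rcases lt_trichotomy (τ ⬝ᵥ w) 0 with h | h | h
      · have : τ' ⬝ᵥ w ≤ 0 := by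
          by_contra hc
          have := hsep' w hw (by omega); omega
        rw [abs_of_nonpos h.le, abs_of_nonpos this, abs_of_nonpos (by omega)]; ring
      · simp [h]
      · have := hsep w hw h
        rw [abs_of_nonneg h.le, abs_of_nonneg this, abs_of_nonneg (by omega)]
    have hne : τ + τ' ≠ 0 := by
      intro h0
      have := hf_pos hD ((mem_CC hD).1 hτ).1
      have := hf_pos hD ((mem_CC hD).1 hτ').1
      rw [h0] at hadd
      simp [hf] at hadd this
      simp only [hf] at *
      linarith
    have hσ := rep_mem hD hne
    obtain ⟨hsm, hss⟩ := rep_spec hD (τ + τ')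
    have l1 : Le D τ (rep D (τ + τ')) := by
      intro w hw h
      have := hsep w hw h
      rw [← hss.pos hw, add_dotProduct]; omega
    have l2 : Le D τ' (rep D (τ + τ')) := by
      intro w hw h
      have := hsep' w hw h
      rw [← hss.pos hw, add_dotProduct]; omega
    by_cases e1 : τ = rep D (τ + τ')
    · right; rw [← e1] at l2; exact l2
    by_cases e2 : τ' = rep D (τ + τ')
    · left; rw [← e2] at l1; exact l1
    exfalso
    have r1 := lev_lt (l1.rk_lt hD hτ hσ e1)
    have r2 := lev_lt (l2.rk_lt hD hτ' hσ e2)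
    have hlev : lev D (rep D (τ + τ')) = lev D (τ + τ') := by
      unfold lev; rw [rk_congr (rep_spec hD (τ + τ')).2]
    rw [hlev] at r1 r2
    obtain ⟨m, hm1, hm2, hm3, hm4⟩ : ∃ m, δ (lev D τ) ≤ m ∧ δ (lev D τ') ≤ m ∧ G0 ≤ m ∧
        3 * MM d D * m ≤ δ (lev D (τ + τ')) := by
      rcases le_total (δ (lev D τ)) (δ (lev D τ')) with h | h
      · exact ⟨_, h, le_rfl, hδ0 _, hδ _ _ r2⟩
      · exact ⟨_, le_rfl, h, hδ0 _, hδ _ _ r1⟩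
    have i1 := dec' hD R L' hL δ hδn x hx (τ + τ') hne (2 * MM d D) (3 * m) (by positivity)
      (by linarith) (by linarith) hQ
    rw [hadd, hdx] at i1
    nlinarith

end PLB

namespace PLB

open Matrix

/-! ### Part D1: lexicographic potentials along chains -/

def IsCh (D : ℕ) (act : Finset (Fin d → ℤ)) : Prop :=
  act ⊆ CC d D ∧ ∀ τ ∈ act, ∀ σ ∈ act, Le D τ σ ∨ Le D σ τ

open Classical in
noncomputable def low (D : ℕ) (act : Finset (Fin d → ℤ)) (τ : Fin d → ℤ) : Finset (Fin d → ℤ) :=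
  act.filter (fun σ => Le D σ τ)

theorem mem_low {D : ℕ} {act : Finset (Fin d → ℤ)} {τ σ : Fin d → ℤ} :
    σ ∈ low D act τ ↔ σ ∈ act ∧ Le D σ τ := by
  simp [low]

noncomputable def lam (D : ℕ) (N : ℤ) (S : Finset (Fin d → ℤ)) (x : Fin d → ℤ) : ℤ :=
  ∑ σ ∈ S, N ^ rk D σ * (σ ⬝ᵥ x)

theorem lam_add (D : ℕ) (N : ℤ) (S : Finset (Fin d → ℤ)) (x y : Fin d → ℤ) :
    lam D N S (x + y) = lam D N S x + lam D N S y := by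
  unfold lam
  rw [← Finset.sum_add_distrib]
  apply Finset.sum_congr rfl
  intro σ _
  rw [dotProduct_add]; ring

theorem lam_sub (D : ℕ) (N : ℤ) (S : Finset (Fin d → ℤ)) (x y : Fin d → ℤ) :
    lam D N S (x - y) = lam D N S x - lam D N S y := by
  have := lam_add D N S (x - y) y
  rw [sub_add_cancel] at this
  linarith

theorem rk_inj {D : ℕ} (hD : 1 ≤ D) {act : Finset (Fin d → ℤ)} (h : IsCh D act) :
    Set.InjOn (rk D) (act : Set (Fin d → ℤ)) := by
  intro a ha b hb hab
  by_contra hne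
  have ha' := h.1 ha
  have hb' := h.1 hb
  rcases h.2 a ha b hb with hl | hl
  · have := hl.rk_lt hD ha' hb' hne; omega
  · have := hl.rk_lt hD hb' ha' (Ne.symm hne); omega

theorem chain_card {D : ℕ} (hD : 1 ≤ D) {act : Finset (Fin d → ℤ)} (h : IsCh D act) :
    act.card ≤ d + 1 := by
  have h1 : (act.image (rk D)).card = act.card := Finset.card_image_of_injOn (rk_inj hD h)
  have h2 : act.image (rk D) ⊆ Finset.range (d + 1) := by
    intro j hj
    obtain ⟨σ, _, rfl⟩ := Finset.mem_image.1 hj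
    have := rk_le D σ
    simp; omega
  have := Finset.card_le_card h2
  simp at this
  omega

theorem lam_sign {D : ℕ} {N : ℤ} (hN : 1 ≤ N) {act : Finset (Fin d → ℤ)} {τ w : Fin d → ℤ}
    (hτ : τ ∈ act) (hw : w ∈ WW d D) (h : lam D N (low D act τ) w ≤ 0) : τ ⬝ᵥ w ≤ 0 := by
  by_contra hc
  push Not at hc
  have hmem : τ ∈ low D act τ := mem_low.2 ⟨hτ, Le.refl D τ⟩
  have h1 : ∀ σ ∈ low D act τ, 0 ≤ N ^ rk D σ * (σ ⬝ᵥ w) := by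
    intro σ hσ
    have : 0 ≤ σ ⬝ᵥ w := by
      by_contra hc2
      have := (mem_low.1 hσ).2.neg hw (by omega)
      omega
    positivity
  have h2 : N ^ rk D τ * (τ ⬝ᵥ w) ≤ lam D N (low D act τ) w :=
    Finset.single_le_sum (f := fun σ => N ^ rk D σ * (σ ⬝ᵥ w)) h1 hmem
  have : 0 < N ^ rk D τ * (τ ⬝ᵥ w) := by positivity
  linarith

theorem lam_lex {D : ℕ} (hD : 1 ≤ D) {N : ℤ} (hN : 1 ≤ N) {act : Finset (Fin d → ℤ)}
    (hact : IsCh D act) {τ x : Fin d → ℤ} (hτ : τ ∈ act)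
    (hx : ∀ σ ∈ CC d D, |σ ⬝ᵥ x| ≤ N - 1) (h : lam D N act x ≤ 0) :
    lam D N (low D act τ) x ≤ 0 := by
  classical
  by_contra hc
  push Not at hc
  have hsub : low D act τ ⊆ act := fun σ hσ => (mem_low.1 hσ).1
  have hsplit : lam D N act x = lam D N (act \ low D act τ) x + lam D N (low D act τ) x := by
    unfold lam
    rw [Finset.sum_sdiff hsub]
  have hdvd : N ^ rk D τ ∣ lam D N (low D act τ) x := by
    unfold lam
    apply Finset.dvd_sum
    intro σ hσ
    apply Dvd.dvd.mul_right
    apply pow_dvd_pow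
    by_cases he : σ = τ
    · rw [he]
    · obtain ⟨h1, h2⟩ := mem_low.1 hσ
      exact (h2.rk_lt hD (hact.1 h1) (hact.1 hτ) he).le
  have h1 : N ^ rk D τ ≤ lam D N (low D act τ) x := Int.le_of_dvd hc hdvd
  have h2 : -lam D N (act \ low D act τ) x ≤ N ^ rk D τ - 1 := by
    calc -lam D N (act \ low D act τ) x
        = ∑ σ ∈ act \ low D act τ, -(N ^ rk D σ * (σ ⬝ᵥ x)) := by
          unfold lam; rw [Finset.sum_neg_distrib]
      _ ≤ ∑ σ ∈ act \ low D act τ, N ^ rk D σ * (N - 1) := by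
          apply Finset.sum_le_sum
          intro σ hσ
          have h3 := hx σ (hact.1 (Finset.mem_sdiff.1 hσ).1)
          have h4 := neg_le_abs (σ ⬝ᵥ x)
          have h5 : 0 ≤ N ^ rk D σ := by positivity
          nlinarith
      _ = (∑ j ∈ (act \ low D act τ).image (rk D), N ^ j) * (N - 1) := by
          rw [Finset.sum_image, Finset.sum_mul]
          intro a ha b hb hab
          exact rk_inj hD hact (Finset.mem_sdiff.1 ha).1 (Finset.mem_sdiff.1 hb).1 hab
      _ ≤ (∑ j ∈ Finset.range (rk D τ), N ^ j) * (N - 1) := by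
          apply mul_le_mul_of_nonneg_right _ (by omega)
          apply Finset.sum_le_sum_of_subset_of_nonneg
          · intro j hj
            obtain ⟨σ, hσ, rfl⟩ := Finset.mem_image.1 hj
            obtain ⟨h3, h4⟩ := Finset.mem_sdiff.1 hσ
            have h5 : ¬ Le D σ τ := fun h => h4 (mem_low.2 ⟨h3, h⟩)
            have h6 : Le D τ σ := (hact.2 σ h3 τ hτ).resolve_left h5
            rw [Finset.mem_range]
            exact h6.rk_lt hD (hact.1 hτ) (hact.1 h3) (fun h => h5 (h ▸ Le.refl D _))
          · intro j _ _; positivity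
      _ = N ^ rk D τ - 1 := geom_sum_mul N _
  linarith

noncomputable def pot (D : ℕ) (N : ℤ) (S : Finset (Fin d → ℤ)) (F : Finset (Fin d → ℤ)) : ℤ :=
  if h : F.Nonempty then F.sup' h (lam D N S) else 0

theorem le_pot (D : ℕ) (N : ℤ) (S : Finset (Fin d → ℤ)) {F : Finset (Fin d → ℤ)}
    {a : Fin d → ℤ} (ha : a ∈ F) : lam D N S a ≤ pot D N S F := by
  unfold pot
  rw [dif_pos ⟨a, ha⟩]
  exact Finset.le_sup' _ ha

theorem exists_best {D : ℕ} (hD : 1 ≤ D) {N : ℤ} (hN : 1 ≤ N) {act : Finset (Fin d → ℤ)}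
    (hact : IsCh D act) {F : Finset (Fin d → ℤ)} (hF : F.Nonempty)
    (hx : ∀ σ ∈ CC d D, ∀ a ∈ F, ∀ a' ∈ F, |σ ⬝ᵥ (a' - a)| ≤ N - 1) :
    ∃ a ∈ F, ∀ τ ∈ act, pot D N (low D act τ) F = lam D N (low D act τ) a := by
  obtain ⟨a, ha, hmax⟩ := Finset.exists_max_image F (lam D N act) hF
  refine ⟨a, ha, fun τ hτ => le_antisymm ?_ (le_pot _ _ _ ha)⟩
  unfold pot
  rw [dif_pos hF]
  apply Finset.sup'_le
  intro a' ha'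
  have h1 := hmax a' ha'
  have h2 := lam_lex hD hN hact hτ (fun σ hσ => hx σ hσ a ha a' ha') (by
    rw [lam_sub]; linarith)
  rw [lam_sub] at h2
  linarith

theorem exists_N {V : Type} [Fintype V] (D : ℕ) (A : V → Finset (Fin d → ℤ)) :
    ∃ N : ℤ, 1 ≤ N ∧ ∀ v, ∀ σ ∈ CC d D, ∀ a ∈ A v, ∀ a' ∈ A v, |σ ⬝ᵥ (a' - a)| ≤ N - 1 := by
  classical
  obtain ⟨K, hK⟩ := Finset.exists_le (Finset.univ.biUnion fun v : V =>
    ((CC d D) ×ˢ ((A v) ×ˢ (A v))).image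
      (fun p : (Fin d → ℤ) × (Fin d → ℤ) × (Fin d → ℤ) => |p.1 ⬝ᵥ (p.2.2 - p.2.1)|))
  refine ⟨|K| + 1, by have := abs_nonneg K; omega, ?_⟩
  intro v σ hσ a ha a' ha'
  have := hK (|σ ⬝ᵥ (a' - a)|) (by
    simp only [Finset.mem_biUnion, Finset.mem_univ, true_and, Finset.mem_image,
      Finset.mem_product]
    exact ⟨v, (σ, a, a'), ⟨hσ, ha, ha'⟩, rfl⟩)
  have := le_abs_self K
  omega

end PLB

namespace PLB

open Matrix

/-! ### Part D2: constants and the ranking functions -/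

noncomputable def kA (d D : ℕ) : ℤ := 3 * (d + 1) * MM d D
noncomputable def kX (d D n : ℕ) : ℤ := kA d D * MM d D * n
noncomputable def kQ (d D n : ℕ) : ℤ := MM d D + 2 * MM d D * n * (d + 2)
noncomputable def kG (d D n : ℕ) : ℤ :=
  2 * (8 * kX d D n) + 2 * MM d D * (d + 2) * (8 * kX d D n) + 1
noncomputable def kδ (d D n : ℕ) (j : ℕ) : ℤ := kG d D n * (3 * MM d D) ^ (j + 1)
noncomputable def kR (d D n : ℕ) : ℤ := kδ d D n d + kG d D n
noncomputable def kc (D n : ℕ) (ν : Fin d → ℤ) : ℤ := kR d D n * hf D ν - kδ d D n (lev D ν)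

theorem MM_pos {d D : ℕ} (hd : 1 ≤ d) (hD : 1 ≤ D) : 1 ≤ MM d D := by
  unfold MM
  have : 0 < d * (d.factorial * D ^ d) * D := by positivity
  exact_mod_cast this

theorem kA_ge {d D : ℕ} (hd : 1 ≤ d) (hD : 1 ≤ D) : 3 * ((d : ℤ) + 1) ≤ kA d D := by
  have := MM_pos hd hD
  unfold kA
  nlinarith

theorem kX_ge {d D n : ℕ} (hd : 1 ≤ d) (hD : 1 ≤ D) :
    3 * ((d : ℤ) + 1) * (MM d D * n) ≤ kX d D n := by
  have h1 := MM_pos hd hD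
  have h2 := kA_ge hd hD
  unfold kX
  rw [mul_assoc]
  have : 0 ≤ MM d D * n := by positivity
  nlinarith

theorem kX_pos {d D n : ℕ} (hd : 1 ≤ d) (hD : 1 ≤ D) (hn : 1 ≤ n) : 0 < kX d D n := by
  have h1 := MM_pos hd hD
  have h2 := kX_ge (n := n) hd hD
  have : 0 < 3 * ((d : ℤ) + 1) * (MM d D * n) := by positivity
  linarith

theorem kQ_le {d D n : ℕ} (hd : 1 ≤ d) (hD : 1 ≤ D) (hn : 1 ≤ n) : kQ d D n ≤ 4 * kX d D n := by
  have h1 := MM_pos hd hD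
  have h2 := kX_ge (n := n) hd hD
  have h3 : MM d D ≤ MM d D * n := by
    have : (1 : ℤ) ≤ n := by exact_mod_cast hn
    nlinarith
  have h4 : 0 ≤ (d : ℤ) * (MM d D * n) := by positivity
  unfold kQ
  nlinarith

theorem kMn_le {d D n : ℕ} (hd : 1 ≤ d) (hD : 1 ≤ D) : 2 * (MM d D * n) ≤ 4 * kX d D n := by
  have h1 := MM_pos hd hD
  have h2 := kX_ge (n := n) hd hD
  have h4 : 0 ≤ (d : ℤ) * (MM d D * n) := by positivity
  have h5 : 0 ≤ (MM d D * n) := by positivity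
  nlinarith

theorem kG_pos {d D n : ℕ} (hd : 1 ≤ d) (hD : 1 ≤ D) (hn : 1 ≤ n) : 0 < kG d D n := by
  have h1 := MM_pos hd hD
  have h2 := kX_pos hd hD hn
  unfold kG
  positivity

theorem kδ_ge {d D n : ℕ} (hd : 1 ≤ d) (hD : 1 ≤ D) (hn : 1 ≤ n) (k : ℕ) :
    kG d D n ≤ kδ d D n k := by
  have h1 := MM_pos hd hD
  have h2 := kG_pos hd hD hn
  have h3 : (1 : ℤ) ≤ (3 * MM d D) ^ (k + 1) := one_le_pow₀ (by linarith)
  unfold kδ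
  nlinarith

theorem kδ_mul {d D n : ℕ} (hd : 1 ≤ d) (hD : 1 ≤ D) (hn : 1 ≤ n) (j k : ℕ) (h : j < k) :
    3 * MM d D * kδ d D n j ≤ kδ d D n k := by
  have h1 := MM_pos hd hD
  have h2 := kG_pos hd hD hn
  unfold kδ
  have h3 : (3 * MM d D) ^ (j + 2) ≤ (3 * MM d D) ^ (k + 1) :=
    pow_le_pow_right₀ (by linarith) (by omega)
  calc 3 * MM d D * (kG d D n * (3 * MM d D) ^ (j + 1)) = kG d D n * (3 * MM d D) ^ (j + 2) := by
        ring
    _ ≤ _ := by gcongr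

theorem kR_ge {d D n : ℕ} (hd : 1 ≤ d) (hD : 1 ≤ D) (hn : 1 ≤ n) (k : ℕ) (h : k ≤ d) :
    kδ d D n k + kG d D n ≤ kR d D n := by
  have h1 := MM_pos hd hD
  have h2 := kG_pos hd hD hn
  unfold kR kδ
  have h3 : (3 * MM d D) ^ (k + 1) ≤ (3 * MM d D) ^ (d + 1) :=
    pow_le_pow_right₀ (by linarith) (by omega)
  have : kG d D n * (3 * MM d D) ^ (k + 1) ≤ kG d D n * (3 * MM d D) ^ (d + 1) := by gcongr
  linarith

theorem kc_pos {D n : ℕ} (hd : 1 ≤ d) (hD : 1 ≤ D) (hn : 1 ≤ n) {ν : Fin d → ℤ}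
    (hν : ν ∈ CC d D) : 0 < kc D n ν := by
  have h1 := hf_pos hD ((mem_CC hD).1 hν).1
  have h2 := kR_ge hd hD hn _ (lev_le D ν)
  have h3 := kG_pos hd hD hn
  have h4 := kδ_ge hd hD hn (lev D ν)
  unfold kc
  nlinarith

noncomputable def tm (D n : ℕ) (P : (Fin d → ℤ) → ℤ) (σ : Fin d → ℤ) : ℤ :=
  2 * kX d D n - (P σ - kc D n σ + 4 * kX d D n)

noncomputable def phi (D n : ℕ) (P : (Fin d → ℤ) → ℤ) (act : Finset (Fin d → ℤ))
    (τ : Fin d → ℤ) : ℤ :=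
  kA d D * P τ + ∑ σ ∈ (low D act τ).erase τ, tm D n P σ

theorem mem_below {D : ℕ} {act : Finset (Fin d → ℤ)} {τ σ : Fin d → ℤ} :
    σ ∈ (low D act τ).erase τ ↔ σ ≠ τ ∧ σ ∈ act ∧ Le D σ τ := by
  rw [Finset.mem_erase, mem_low]

theorem below_card {D : ℕ} (hD : 1 ≤ D) {act : Finset (Fin d → ℤ)} (h : IsCh D act)
    {τ : Fin d → ℤ} (hτ : τ ∈ act) : ((low D act τ).erase τ).card ≤ d := by
  have h1 : (low D act τ).erase τ ⊆ act.erase τ := by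
    intro σ hσ
    rw [mem_below] at hσ
    rw [Finset.mem_erase]; exact ⟨hσ.1, hσ.2.1⟩
  have h2 := Finset.card_le_card h1
  rw [Finset.card_erase_of_mem hτ] at h2
  have := chain_card hD h
  omega

theorem phi_upper {D n : ℕ} (hd : 1 ≤ d) (hD : 1 ≤ D) (hn : 1 ≤ n) {P : (Fin d → ℤ) → ℤ}
    {act : Finset (Fin d → ℤ)} (hact : IsCh D act)
    (hup : ∀ τ ∈ act, phi D n P act τ ≤ kA d D * (kc D n τ + kQ d D n)) :
    ∀ k, ∀ τ ∈ act, lev D τ < k → P τ ≤ kc D n τ + kQ d D n + 4 * kX d D n := by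
  intro k
  induction k with
  | zero => intro τ _ h; omega
  | succ k ih =>
    intro τ hτ hk
    have h1 := hup τ hτ
    have hX := kX_pos hd hD hn
    have hQ := kQ_le hd hD hn
    have hA := kA_ge hd hD
    unfold phi at h1
    have h2 : -((d : ℤ) * (10 * kX d D n)) ≤ ∑ σ ∈ (low D act τ).erase τ, tm D n P σ := by
      calc -((d : ℤ) * (10 * kX d D n)) ≤
          ∑ σ ∈ (low D act τ).erase τ, (-(10 * kX d D n)) := by
            rw [Finset.sum_const, nsmul_eq_mul]
            have h3 : ((((low D act τ).erase τ).card : ℕ) : ℤ) ≤ d := by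
              exact_mod_cast below_card hD hact hτ
            nlinarith
        _ ≤ _ := by
            apply Finset.sum_le_sum
            intro σ hσ
            obtain ⟨a, b, c⟩ := mem_below.1 hσ
            have h4 := lev_lt (c.rk_lt hD (hact.1 b) (hact.1 hτ) a)
            have h5 := ih σ b (by omega)
            unfold tm
            linarith
    have h6 : (d : ℤ) * (10 * kX d D n) ≤ kA d D * (4 * kX d D n) := by
      have : (0 : ℤ) ≤ d := by positivity
      nlinarith
    have h7 : kA d D * P τ ≤ kA d D * (kc D n τ + kQ d D n + 4 * kX d D n) := by linarith
    exact le_of_mul_le_mul_left h7 (by have : (0 : ℤ) ≤ d := by positivity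
                                       linarith)

theorem phi_update {D n : ℕ} (hd : 1 ≤ d) (hD : 1 ≤ D) (hn : 1 ≤ n) {P P2 : (Fin d → ℤ) → ℤ}
    {act act2 : Finset (Fin d → ℤ)} {τ : Fin d → ℤ} (h1 : τ ∈ act) (h2 : τ ∈ act2)
    (hP : ∀ σ, P σ ≤ P2 σ) (hPτ : P2 τ ≤ P τ + 2 * MM d D * n)
    (hin : ∀ σ ∈ act2, σ ∉ act → kc D n σ ≤ P2 σ)
    (hout : ∀ σ ∈ act, σ ∉ act2 → P σ ≤ kc D n σ - 4 * kX d D n)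
    (hne : low D act τ ≠ low D act2 τ) : phi D n P2 act2 τ ≤ phi D n P act τ := by
  classical
  have hX := kX_pos hd hD hn
  set E1 := (low D act τ).erase τ with hE1
  set E2 := (low D act2 τ).erase τ with hE2
  have hne' : E1 ≠ E2 := by
    intro h
    apply hne
    rw [← Finset.insert_erase (mem_low.2 ⟨h1, Le.refl D τ⟩ : τ ∈ low D act τ),
      ← Finset.insert_erase (mem_low.2 ⟨h2, Le.refl D τ⟩ : τ ∈ low D act2 τ), ← hE1, ← hE2, h]
  have s1 : ∑ σ ∈ E1, tm D n P σ = ∑ σ ∈ E1 ∩ E2, tm D n P σ + ∑ σ ∈ E1 \ E2, tm D n P σ :=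
    (Finset.sum_inter_add_sum_sdiff _ _ _).symm
  have s2 : ∑ σ ∈ E2, tm D n P2 σ = ∑ σ ∈ E1 ∩ E2, tm D n P2 σ + ∑ σ ∈ E2 \ E1, tm D n P2 σ := by
    rw [Finset.inter_comm]
    exact (Finset.sum_inter_add_sum_sdiff _ _ _).symm
  have t1 : ∑ σ ∈ E1 ∩ E2, tm D n P2 σ ≤ ∑ σ ∈ E1 ∩ E2, tm D n P σ := by
    apply Finset.sum_le_sum
    intro σ _
    have := hP σ
    unfold tm; linarith
  have t2 : ∑ σ ∈ E2 \ E1, tm D n P2 σ ≤ ((E2 \ E1).card : ℤ) * (-(2 * kX d D n)) := by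
    rw [← nsmul_eq_mul, ← Finset.sum_const]
    apply Finset.sum_le_sum
    intro σ hσ
    obtain ⟨ha, hb⟩ := Finset.mem_sdiff.1 hσ
    obtain ⟨a, b, c⟩ := mem_below.1 ha
    have := hin σ b (fun h => hb (mem_below.2 ⟨a, h, c⟩))
    unfold tm; linarith
  have t3 : ((E1 \ E2).card : ℤ) * (2 * kX d D n) ≤ ∑ σ ∈ E1 \ E2, tm D n P σ := by
    rw [← nsmul_eq_mul, ← Finset.sum_const]
    apply Finset.sum_le_sum
    intro σ hσ
    obtain ⟨ha, hb⟩ := Finset.mem_sdiff.1 hσ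
    obtain ⟨a, b, c⟩ := mem_below.1 ha
    have := hout σ b (fun h => hb (mem_below.2 ⟨a, h, c⟩))
    unfold tm; linarith
  have t4 : (1 : ℤ) ≤ (E1 \ E2).card + (E2 \ E1).card := by
    by_contra hc
    have c1 : (E1 \ E2).card = 0 := by omega
    have c2 : (E2 \ E1).card = 0 := by omega
    rw [Finset.card_eq_zero, Finset.sdiff_eq_empty_iff_subset] at c1 c2
    exact hne' (Finset.Subset.antisymm c1 c2)
  have t5 : kA d D * P2 τ ≤ kA d D * P τ + 2 * kX d D n := by
    have h0 := kA_ge hd hD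
    have h0' : 0 ≤ kA d D := by
      have : (0 : ℤ) ≤ d := by positivity
      linarith
    have : kA d D * P2 τ ≤ kA d D * (P τ + 2 * MM d D * n) := by gcongr
    unfold kX
    linarith
  unfold phi
  rw [← hE1, ← hE2]
  nlinarith

theorem phi_new {D n : ℕ} (hd : 1 ≤ d) (hD : 1 ≤ D) (hn : 1 ≤ n) {P : (Fin d → ℤ) → ℤ}
    {act : Finset (Fin d → ℤ)} (hact : IsCh D act) {τ : Fin d → ℤ} (hτ : τ ∈ act)
    (hlo : ∀ σ ∈ act, kc D n σ - 4 * kX d D n < P σ)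
    (hPτ : P τ ≤ kc D n τ + MM d D + 2 * MM d D * n) :
    phi D n P act τ ≤ kA d D * (kc D n τ + kQ d D n) := by
  have hX := kX_pos hd hD hn
  have h1 : ∑ σ ∈ (low D act τ).erase τ, tm D n P σ ≤ (d : ℤ) * (2 * kX d D n) := by
    calc ∑ σ ∈ (low D act τ).erase τ, tm D n P σ ≤
        ∑ σ ∈ (low D act τ).erase τ, (2 * kX d D n) := by
          apply Finset.sum_le_sum
          intro σ hσ
          have := hlo σ (mem_below.1 hσ).2.1
          unfold tm; linarith
      _ ≤ _ := by
          rw [Finset.sum_const, nsmul_eq_mul]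
          have h3 : ((((low D act τ).erase τ).card : ℕ) : ℤ) ≤ d := by
            exact_mod_cast below_card hD hact hτ
          nlinarith
  have h0' : 0 ≤ kA d D := by
    have := kA_ge hd hD
    have : (0 : ℤ) ≤ d := by positivity
    linarith
  have h2 : kA d D * P τ ≤ kA d D * (kc D n τ + MM d D + 2 * MM d D * n) := by gcongr
  have h3 : kA d D * (kc D n τ + kQ d D n) = kA d D * (kc D n τ + MM d D + 2 * MM d D * n)
      + (d + 1) * (2 * kX d D n) := by
    unfold kQ kX; ring
  unfold phi
  linarith

theorem phi_pop {D n : ℕ} (hd : 1 ≤ d) (hD : 1 ≤ D) {P P2 : (Fin d → ℤ) → ℤ}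
    {act : Finset (Fin d → ℤ)} (hact : IsCh D act) {τ : Fin d → ℤ} (hτ : τ ∈ act)
    {w : Fin d → ℤ} (hw : w ∈ WW d D) (k : (Fin d → ℤ) → ℤ) (hk0 : ∀ σ, 0 ≤ k σ)
    (hP : ∀ σ ∈ act, P2 σ = P σ + σ ⬝ᵥ w - 2 * MM d D * k σ)
    (hk : ∀ σ ∈ act, Le D σ τ → k σ ≤ k τ) (hz : k τ = 0 → τ ⬝ᵥ w ≤ 0) :
    phi D n P2 act τ ≤ phi D n P act τ := by
  have hM := MM_pos hd hD
  have hA : kA d D = 3 * (d + 1) * MM d D := rfl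
  have hA3 := kA_ge hd hD
  have hd0 : (0 : ℤ) ≤ d := by positivity
  set E := (low D act τ).erase τ with hE
  have hcard : (E.card : ℤ) ≤ d := by exact_mod_cast below_card hD hact hτ
  have e1 : ∑ σ ∈ E, tm D n P2 σ = ∑ σ ∈ E, tm D n P σ +
      ∑ σ ∈ E, (2 * MM d D * k σ - σ ⬝ᵥ w) := by
    rw [← Finset.sum_add_distrib]
    apply Finset.sum_congr rfl
    intro σ hσ
    unfold tm
    rw [hP σ (mem_below.1 hσ).2.1]; ring
  have main : kA d D * (τ ⬝ᵥ w - 2 * MM d D * k τ) +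
      ∑ σ ∈ E, (2 * MM d D * k σ - σ ⬝ᵥ w) ≤ 0 := by
    have bound : ∀ σ ∈ E, 2 * MM d D * k σ - σ ⬝ᵥ w ≤ MM d D + 2 * MM d D * k τ := by
      intro σ hσ
      obtain ⟨a, b, c⟩ := mem_below.1 hσ
      have h1 := CC_dot hD (hact.1 b) hw
      have h2 := neg_le_abs (σ ⬝ᵥ w)
      have h3 := hk σ b c
      nlinarith
    have bsum : ∑ σ ∈ E, (2 * MM d D * k σ - σ ⬝ᵥ w) ≤ d * (MM d D + 2 * MM d D * k τ) := by
      calc ∑ σ ∈ E, (2 * MM d D * k σ - σ ⬝ᵥ w) ≤ ∑ σ ∈ E, (MM d D + 2 * MM d D * k τ) :=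
            Finset.sum_le_sum bound
        _ ≤ _ := by
            rw [Finset.sum_const, nsmul_eq_mul]
            have : 0 ≤ MM d D + 2 * MM d D * k τ := by have := hk0 τ; positivity
            gcongr
    rcases (hk0 τ).eq_or_lt with h0 | h0
    · have h0 := h0.symm
      have hle := hz h0
      rw [h0] at bsum ⊢
      rcases hle.eq_or_lt with h1 | h1
      · rw [h1]
        have : ∑ σ ∈ E, (2 * MM d D * k σ - σ ⬝ᵥ w) ≤ 0 := by
          apply Finset.sum_nonpos
          intro σ hσ
          obtain ⟨a, b, c⟩ := mem_below.1 hσ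
          have h2 := c.zero hw h1
          have h3 := hk σ b c
          have h4 := hk0 σ
          have h5 : k σ = 0 := by omega
          rw [h2, h5]; simp
        linarith
      · have : kA d D * (τ ⬝ᵥ w - 2 * MM d D * 0) ≤ - kA d D := by nlinarith
        nlinarith
    · have h1 := CC_dot hD (hact.1 hτ) hw
      have h2 := le_abs_self (τ ⬝ᵥ w)
      have h3 : τ ⬝ᵥ w - 2 * MM d D * k τ ≤ -(MM d D * k τ) := by nlinarith
      have h4 : kA d D * (τ ⬝ᵥ w - 2 * MM d D * k τ) ≤ 3 * (d + 1) * (-(MM d D * k τ)) := by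
        have h5 : 0 ≤ MM d D * k τ := by positivity
        nlinarith
      have h6 : MM d D ≤ MM d D * k τ := by nlinarith
      nlinarith
  unfold phi
  rw [← hE, e1, hP τ hτ]
  linarith

end PLB

namespace PLB

open Matrix

/-! ### Part D3: the state machine -/

structure Item (V : Type) (d : ℕ) where
  src : V
  u : Fin d → ℤ
  gd : Finset (Fin d → ℤ)

structure St (V : Type) (d : ℕ) where
  v : V
  stk : List (Item V d)
  x : Fin d → ℤ
  act : Finset (Fin d → ℤ)

def usum (l : List (Item V d)) : Fin d → ℤ := (l.map Item.u).sum

def bad (l : List (Item V d)) (τ : Fin d → ℤ) : ℤ :=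
  (l.map (fun t => if τ ∈ t.gd then (0 : ℤ) else 1)).sum

theorem bad_nonneg (l : List (Item V d)) (τ : Fin d → ℤ) : 0 ≤ bad l τ := by
  unfold bad
  apply List.sum_nonneg
  intro a ha
  obtain ⟨t, _, rfl⟩ := List.mem_map.1 ha
  split_ifs <;> simp

theorem bad_append (l l' : List (Item V d)) (τ : Fin d → ℤ) :
    bad (l ++ l') τ = bad l τ + bad l' τ := by
  simp [bad]

theorem bad_cons (t : Item V d) (l : List (Item V d)) (τ : Fin d → ℤ) :
    bad (t :: l) τ = (if τ ∈ t.gd then (0 : ℤ) else 1) + bad l τ := by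
  simp [bad]

theorem bad_le (l : List (Item V d)) (τ : Fin d → ℤ) : bad l τ ≤ l.length := by
  induction l with
  | nil => simp [bad]
  | cons t l ih =>
    rw [bad_cons]
    push_cast [List.length_cons]
    split_ifs <;> omega

theorem bad_mono (l : List (Item V d)) (τ σ : Fin d → ℤ)
    (h : ∀ t ∈ l, τ ∈ t.gd → σ ∈ t.gd) : bad l σ ≤ bad l τ := by
  induction l with
  | nil => simp [bad]
  | cons t l ih =>
    rw [bad_cons, bad_cons]
    have h1 := ih (fun t ht => h t (List.mem_cons_of_mem _ ht))
    have h2 := h t (List.mem_cons_self)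
    split_ifs <;> first | omega | tauto

theorem bad_zero (l : List (Item V d)) (τ : Fin d → ℤ) (h : bad l τ = 0) :
    ∀ t ∈ l, τ ∈ t.gd := by
  induction l with
  | nil => simp
  | cons t l ih =>
    rw [bad_cons] at h
    have h1 := bad_nonneg l τ
    intro s hs
    split_ifs at h with hg
    · rcases List.mem_cons.1 hs with rfl | hs
      · exact hg
      · exact ih (by omega) s hs
    · omega

theorem usum_append (l l' : List (Item V d)) : usum (l ++ l') = usum l + usum l' := by
  simp [usum]

theorem usum_cons (t : Item V d) (l : List (Item V d)) : usum (t :: l) = t.u + usum l := by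
  simp [usum]

theorem usum_bound (l : List (Item V d)) (e : ℕ) (h : ∀ t ∈ l, ∀ i, |t.u i| ≤ (e : ℤ))
    (i : Fin d) : |usum l i| ≤ l.length * e := by
  induction l with
  | nil => simp [usum]
  | cons t l ih =>
    rw [usum_cons, Pi.add_apply]
    have h1 := ih (fun t ht => h t (List.mem_cons_of_mem _ ht))
    have h2 := h t (List.mem_cons_self) i
    have h3 := abs_add_le (t.u i) (usum l i)
    push_cast [List.length_cons]
    linarith

def PathOK (D : ℕ) (N : ℤ) (pt : Finset (Fin d → ℤ) → V → ℤ) (act : Finset (Fin d → ℤ)) :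
    V → List (Item V d) → Prop
  | _, [] => True
  | v, t :: l => (∀ τ ∈ act, τ ∈ t.gd →
      lam D N (low D act τ) t.u ≤ pt (low D act τ) v - pt (low D act τ) t.src) ∧
      PathOK D N pt act t.src l

theorem PathOK.split {D : ℕ} {N : ℤ} {pt : Finset (Fin d → ℤ) → V → ℤ}
    {act : Finset (Fin d → ℤ)} (p : List (Item V d)) (t : Item V d) (q : List (Item V d)) :
    ∀ v, PathOK D N pt act v (p ++ t :: q) → PathOK D N pt act t.src q ∧
      ∀ τ ∈ act, (∀ s ∈ p ++ [t], τ ∈ s.gd) →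
        lam D N (low D act τ) (usum (p ++ [t])) ≤
          pt (low D act τ) v - pt (low D act τ) t.src := by
  induction p with
  | nil =>
    intro v h
    refine ⟨h.2, fun τ hτ hg => ?_⟩
    have := h.1 τ hτ (hg t (by simp))
    simpa [usum] using this
  | cons s p ih =>
    intro v h
    obtain ⟨h1, h2⟩ := ih s.src h.2
    refine ⟨h1, fun τ hτ hg => ?_⟩
    have a1 := h2 τ hτ (fun r hr => hg r (by
      rw [List.cons_append]; exact List.mem_cons_of_mem _ hr))
    have a2 := h.1 τ hτ (hg s (by simp))
    rw [List.cons_append, usum_cons, lam_add]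
    linarith

noncomputable def psi (D : ℕ) (x : Fin d → ℤ) (l : List (Item V d)) (τ : Fin d → ℤ) : ℤ :=
  τ ⬝ᵥ x + 2 * MM d D * bad l τ

structure Core (D n e : ℕ) (N : ℤ) (A : V → Finset (Fin d → ℤ)) (s : St V d) : Prop where
  chain : IsCh D s.act
  up : ∀ τ ∈ s.act, phi D n (psi D s.x s.stk) s.act τ ≤ kA d D * (kc D n τ + kQ d D n)
  nodup : (s.v :: s.stk.map Item.src).Nodup
  ub : ∀ t ∈ s.stk, ∀ i, |t.u i| ≤ (e : ℤ)
  gd : ∀ t ∈ s.stk, t.gd ⊆ s.act ∧ ∀ τ ∈ t.gd, low D s.act τ ⊆ t.gd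
  path : PathOK D N (fun S v => pot D N S (A v)) s.act s.v s.stk
  ne : (A s.v).Nonempty
  out : ∀ τ ∈ CC d D, τ ∉ s.act → τ ⬝ᵥ s.x < kc D n τ + MM d D

structure Inv (D n e : ℕ) (N : ℤ) (A : V → Finset (Fin d → ℤ)) (s : St V d) : Prop where
  core : Core D n e N A s
  lo : ∀ τ ∈ s.act, kc D n τ - 4 * kX d D n < psi D s.x s.stk τ
  out' : ∀ τ ∈ CC d D, τ ∉ s.act → τ ⬝ᵥ s.x < kc D n τ

theorem Core.len {D n e : ℕ} {N : ℤ} {A : V → Finset (Fin d → ℤ)} {s : St V d}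
    (h : Core D n e N A s) (hn : Fintype.card V ≤ n) : s.stk.length + 1 ≤ n := by
  have := h.nodup.length_le_card
  simp at this
  omega

theorem Core.K {D n e : ℕ} (hd : 1 ≤ d) (hD : 1 ≤ D) (hn : 1 ≤ n) {N : ℤ}
    {A : V → Finset (Fin d → ℤ)} {s : St V d}
    (h : Core D n e N A s) : ∀ ν ∈ CC d D,
      ν ⬝ᵥ s.x ≤ kR d D n * hf D ν - kδ d D n (lev D ν) + 8 * kX d D n := by
  intro ν hν
  have hX := kX_pos hd hD hn
  have hQ := kQ_le hd hD hn
  have hM := MM_pos hd hD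
  have hMQ : MM d D ≤ kQ d D n := by unfold kQ; have : 0 ≤ 2 * MM d D * n * (d + 2) := by positivity
                                     linarith
  have : ν ⬝ᵥ s.x ≤ kc D n ν + 8 * kX d D n := by
    by_cases hm : ν ∈ s.act
    · have h1 := phi_upper hd hD hn h.chain h.up (lev D ν + 1) ν hm (by omega)
      have h2 := bad_nonneg s.stk ν
      have h3 : 0 ≤ 2 * MM d D * bad s.stk ν := by positivity
      unfold psi at h1
      linarith
    · have := h.out ν hν hm
      linarith
  exact this

theorem low_low {D : ℕ} {act act2 : Finset (Fin d → ℤ)} {τ σ : Fin d → ℤ}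
    (h : low D act τ = low D act2 τ) (hσ : Le D σ τ) : low D act σ = low D act2 σ := by
  ext κ
  rw [mem_low, mem_low]
  have h1 : κ ∈ low D act τ ↔ κ ∈ low D act2 τ := by rw [h]
  rw [mem_low, mem_low] at h1
  constructor
  · rintro ⟨a, b⟩; exact ⟨(h1.1 ⟨a, b.trans hσ⟩).1, b⟩
  · rintro ⟨a, b⟩; exact ⟨(h1.2 ⟨a, b.trans hσ⟩).1, b⟩

def reItem (f : Finset (Fin d → ℤ) → Finset (Fin d → ℤ)) (t : Item V d) : Item V d :=
  ⟨t.src, t.u, f t.gd⟩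

theorem PathOK.re {D : ℕ} {N : ℤ} {pt : Finset (Fin d → ℤ) → V → ℤ}
    {act act2 : Finset (Fin d → ℤ)} {f : Finset (Fin d → ℤ) → Finset (Fin d → ℤ)}
    (hf : ∀ S, ∀ τ ∈ f S, τ ∈ S ∧ τ ∈ act ∧ low D act τ = low D act2 τ)
    (l : List (Item V d)) : ∀ v, PathOK D N pt act v l →
      PathOK D N pt act2 v (l.map (reItem f)) := by
  induction l with
  | nil => intro v _; trivial
  | cons t l ih =>
    intro v h
    refine ⟨fun τ _ hg => ?_, ih _ h.2⟩
    obtain ⟨a, b, c⟩ := hf _ τ hg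
    have := h.1 τ b a
    rw [c] at this
    exact this

theorem Core.update {D n e : ℕ} (hd : 1 ≤ d) (hD : 1 ≤ D) (hn : 1 ≤ n)
    (hV : Fintype.card V ≤ n) {N : ℤ}
    {A : V → Finset (Fin d → ℤ)} {s : St V d} (h : Core D n e N A s) :
    ∃ s' : St V d, Inv D n e N A s' ∧ s'.v = s.v ∧ s'.x + usum s'.stk = s.x + usum s.stk := by
  classical
  have hX := kX_pos hd hD hn
  have hM := MM_pos hd hD
  have hG := kG_pos hd hD hn
  have hMn := kMn_le (n := n) hd hD
  have hK := h.K hd hD hn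
  let act2 : Finset (Fin d → ℤ) :=
    s.act.filter (fun τ => kc D n τ - 4 * kX d D n < psi D s.x s.stk τ) ∪
    (CC d D \ s.act).filter (fun τ => kc D n τ ≤ τ ⬝ᵥ s.x)
  have mem2 : ∀ τ, τ ∈ act2 ↔ (τ ∈ s.act ∧ kc D n τ - 4 * kX d D n < psi D s.x s.stk τ) ∨
      ((τ ∈ CC d D ∧ τ ∉ s.act) ∧ kc D n τ ≤ τ ⬝ᵥ s.x) := by
    intro τ
    simp only [act2, Finset.mem_union, Finset.mem_filter, Finset.mem_sdiff]
  let f : Finset (Fin d → ℤ) → Finset (Fin d → ℤ) := fun S =>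
    S.filter (fun τ => τ ∈ s.act ∧ low D s.act τ = low D act2 τ)
  have memf : ∀ S τ, τ ∈ f S ↔ τ ∈ S ∧ τ ∈ s.act ∧ low D s.act τ = low D act2 τ := by
    intro S τ
    simp only [f, Finset.mem_filter]
  let stk2 := s.stk.map (reItem f)
  have hlen : (s.stk.length : ℤ) ≤ n := by
    have := h.len hV
    exact_mod_cast (by omega : s.stk.length ≤ n)
  have hbadle : ∀ τ, bad stk2 τ ≤ n := by
    intro τ
    have := bad_le stk2 τ
    simp only [stk2, List.length_map] at this
    linarith
  have hbad1 : ∀ τ, bad s.stk τ ≤ n := fun τ => (bad_le s.stk τ).trans hlen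
  have hbadmono : ∀ τ, bad s.stk τ ≤ bad stk2 τ := by
    intro τ
    simp only [stk2]
    generalize s.stk = l
    induction l with
    | nil => simp [bad]
    | cons t l ih =>
      rw [List.map_cons, bad_cons, bad_cons]
      have : τ ∈ (reItem f t).gd → τ ∈ t.gd := fun h => ((memf _ _).1 h).1
      split_ifs <;> first | omega | tauto
  have hbadeq : ∀ τ ∈ s.act, low D s.act τ = low D act2 τ → bad stk2 τ = bad s.stk τ := by
    intro τ h1 h2
    simp only [stk2]
    generalize s.stk = l
    induction l with
    | nil => simp [bad]
    | cons t l ih =>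
      rw [List.map_cons, bad_cons, bad_cons]
      have : τ ∈ (reItem f t).gd ↔ τ ∈ t.gd := by
        show τ ∈ f t.gd ↔ _
        rw [memf]; tauto
      rw [ih]
      simp only [this]
  have hpsi : ∀ τ, psi D s.x s.stk τ ≤ psi D s.x stk2 τ := by
    intro τ
    have := hbadmono τ
    unfold psi
    nlinarith
  have hxpsi : ∀ τ, τ ⬝ᵥ s.x ≤ psi D s.x stk2 τ := by
    intro τ
    have := bad_nonneg stk2 τ
    unfold psi
    nlinarith
  have hpsix : ∀ τ, psi D s.x stk2 τ ≤ τ ⬝ᵥ s.x + 2 * MM d D * n := by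
    intro τ
    have := hbadle τ
    unfold psi
    nlinarith
  have hch : IsCh D act2 := by
    constructor
    · intro τ hτ
      rcases (mem2 τ).1 hτ with ⟨a, _⟩ | ⟨⟨a, _⟩, _⟩
      · exact h.chain.1 a
      · exact a
    · have hlow : ∀ τ ∈ act2, τ ∈ CC d D ∧
          kR d D n * hf D τ - kδ d D n (lev D τ) - 8 * kX d D n ≤ τ ⬝ᵥ s.x := by
        intro τ hτ
        have : τ ∈ CC d D ∧ kc D n τ - 8 * kX d D n ≤ τ ⬝ᵥ s.x := by
          rcases (mem2 τ).1 hτ with ⟨a, b⟩ | ⟨⟨a, _⟩, b⟩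
          · refine ⟨h.chain.1 a, ?_⟩
            have := hpsi τ
            have := hpsix τ
            linarith
          · exact ⟨a, by linarith⟩
        exact this
      intro τ hτ σ hσ
      refine chain_lemma hD (kR d D n) (8 * kX d D n) (8 * kX d D n) (kG d D n) (by linarith)
        (by linarith) ?_ (kδ d D n) (kδ_ge hd hD hn) (kδ_mul hd hD hn) (kR_ge hd hD hn) s.x
        hK (hlow τ hτ).1 (hlow σ hσ).1 (hlow τ hτ).2 (hlow σ hσ).2
      unfold kG
      linarith
  have hlo : ∀ τ ∈ act2, kc D n τ - 4 * kX d D n < psi D s.x stk2 τ := by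
    intro τ hτ
    rcases (mem2 τ).1 hτ with ⟨a, b⟩ | ⟨⟨a, _⟩, b⟩
    · exact lt_of_lt_of_le b (hpsi τ)
    · have := hxpsi τ
      linarith
  have hout : ∀ τ ∈ CC d D, τ ∉ act2 → τ ⬝ᵥ s.x < kc D n τ := by
    intro τ hτ hna
    rw [mem2] at hna
    push Not at hna
    by_cases hm : τ ∈ s.act
    · have h1 := hna.1 hm
      have h2 : 0 ≤ 2 * MM d D * bad s.stk τ := by have := bad_nonneg s.stk τ; positivity
      unfold psi at h1
      linarith
    · exact hna.2 ⟨hτ, hm⟩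
  refine ⟨⟨s.v, stk2, s.x, act2⟩, ⟨⟨hch, ?_, ?_, ?_, ?_, ?_, h.ne, ?_⟩, hlo, hout⟩, rfl, ?_⟩
  · -- up
    intro τ hτ
    simp only at hτ ⊢
    by_cases hm : τ ∈ s.act
    · by_cases hl : low D s.act τ = low D act2 τ
      · have : phi D n (psi D s.x stk2) act2 τ = phi D n (psi D s.x s.stk) s.act τ := by
          have hps : ∀ σ ∈ low D s.act τ, psi D s.x stk2 σ = psi D s.x s.stk σ := by
            intro σ hσ
            obtain ⟨a, b⟩ := mem_low.1 hσ
            unfold psi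
            rw [hbadeq σ a (low_low hl b)]
          unfold phi
          rw [← hl, hps τ (mem_low.2 ⟨hm, Le.refl D τ⟩)]
          congr 1
          apply Finset.sum_congr rfl
          intro σ hσ
          unfold tm
          rw [hps σ (Finset.mem_of_mem_erase hσ)]
        rw [this]
        exact h.up τ hm
      · refine le_trans (phi_update hd hD hn hm hτ hpsi ?_ ?_ ?_ hl) (h.up τ hm)
        · have h1 := hpsix τ
          have h2 : τ ⬝ᵥ s.x ≤ psi D s.x s.stk τ := by
            have := bad_nonneg s.stk τ
            unfold psi
            nlinarith
          linarith
        · intro σ h1 h2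
          rcases (mem2 σ).1 h1 with ⟨a, b⟩ | ⟨⟨a, _⟩, b⟩
          · exact absurd a h2
          · exact b.trans (hxpsi σ)
        · intro σ h1 h2
          by_contra hc
          exact h2 ((mem2 σ).2 (Or.inl ⟨h1, by linarith⟩))
    · refine phi_new hd hD hn hch hτ hlo ?_
      have h1 := h.out τ (hch.1 hτ) hm
      have h2 := hpsix τ
      linarith
  · -- nodup
    have : stk2.map Item.src = s.stk.map Item.src := by
      simp only [stk2, List.map_map]
      rfl
    simp only [this]
    exact h.nodup
  · intro t ht i
    obtain ⟨t', ht', rfl⟩ := List.mem_map.1 ht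
    exact h.ub t' ht' i
  · intro t ht
    obtain ⟨t', ht', rfl⟩ := List.mem_map.1 ht
    obtain ⟨g1, g2⟩ := h.gd t' ht'
    constructor
    · intro τ hτ
      obtain ⟨a, b, c⟩ := (memf _ _).1 hτ
      have : τ ∈ low D act2 τ := by rw [← c]; exact mem_low.2 ⟨b, Le.refl D τ⟩
      exact (mem_low.1 this).1
    · intro τ hτ σ hσ
      obtain ⟨a, b, c⟩ := (memf _ _).1 hτ
      have hσ' : σ ∈ low D s.act τ := by rw [c]; exact hσ
      exact (memf _ _).2 ⟨g2 τ a hσ', (mem_low.1 hσ').1, low_low c (mem_low.1 hσ').2⟩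
  · exact PathOK.re (fun S τ hτ => (memf S τ).1 hτ) s.stk s.v h.path
  · intro τ h1 h2
    have := hout τ h1 h2
    show τ ⬝ᵥ s.x < _
    linarith
  · have : usum stk2 = usum s.stk := by
      simp only [stk2, usum, List.map_map]
      rfl
    simp only [this]

theorem Inv.move {D n e : ℕ} (hd : 1 ≤ d) (hD : 1 ≤ D) (hV : Fintype.card V ≤ n)
    (hne : n * e ≤ D) {N : ℤ} (hN : 1 ≤ N)
    {A : V → Finset (Fin d → ℤ)} {s : St V d} (h : Inv D n e N A s) (v' : V) (u : Fin d → ℤ)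
    (hu : ∀ i, |u i| ≤ (e : ℤ)) (hA : (A v').Nonempty)
    (hl : ∀ τ ∈ s.act, lam D N (low D s.act τ) u ≤
      pot D N (low D s.act τ) (A v') - pot D N (low D s.act τ) (A s.v)) :
    ∃ s' : St V d, Core D n e N A s' ∧ s'.v = v' ∧
      s'.x + usum s'.stk = s.x + usum s.stk + u := by
  have hM := MM_pos hd hD
  have hc := h.core
  let it : Item V d := ⟨s.v, u, s.act⟩
  let l := it :: s.stk
  have hpath : PathOK D N (fun S v => pot D N S (A v)) s.act v' l :=
    ⟨fun τ hτ _ => hl τ hτ, hc.path⟩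
  have hlub : ∀ t ∈ l, ∀ i, |t.u i| ≤ (e : ℤ) := by
    intro t ht
    rcases List.mem_cons.1 ht with rfl | ht
    · exact hu
    · exact hc.ub t ht
  have hlgd : ∀ t ∈ l, t.gd ⊆ s.act ∧ ∀ τ ∈ t.gd, low D s.act τ ⊆ t.gd := by
    intro t ht
    rcases List.mem_cons.1 ht with rfl | ht
    · exact ⟨fun _ h => h, fun τ _ σ hσ => (mem_low.1 hσ).1⟩
    · exact hc.gd t ht
  have hbadl : ∀ τ ∈ s.act, bad l τ = bad s.stk τ := by
    intro τ hτ
    simp only [l]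
    rw [bad_cons, if_pos hτ]; simp
  have hnd : (l.map Item.src).Nodup := hc.nodup
  have hphil : ∀ τ ∈ s.act, phi D n (psi D s.x l) s.act τ = phi D n (psi D s.x s.stk) s.act τ := by
    intro τ hτ
    have hps : ∀ σ ∈ s.act, psi D s.x l σ = psi D s.x s.stk σ := by
      intro σ hσ; unfold psi; rw [hbadl σ hσ]
    unfold phi
    rw [hps τ hτ]
    congr 1
    apply Finset.sum_congr rfl
    intro σ hσ
    unfold tm
    rw [hps σ (mem_below.1 hσ).2.1]
  by_cases hv : v' ∈ l.map Item.src
  · obtain ⟨t, ht, htv⟩ := List.mem_map.1 hv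
    obtain ⟨p, q, hpq⟩ := List.append_of_mem ht
    obtain ⟨hp1, hp2⟩ := PathOK.split p t q v' (hpq ▸ hpath)
    rw [htv] at hp1 hp2
    set w := usum (p ++ [t]) with hwdef
    have hll : l = (p ++ [t]) ++ q := by rw [hpq]; simp
    have hsub : ∀ r ∈ p ++ [t], r ∈ l := fun r hr => by
      rw [hll]; exact List.mem_append_left _ hr
    have hsubq : ∀ r ∈ q, r ∈ l := fun r hr => by
      rw [hll]; exact List.mem_append_right _ hr
    have hw : w ∈ WW d D := by
      rw [mem_WW]
      intro i
      have h1 := usum_bound (p ++ [t]) e (fun r hr => hlub r (hsub r hr)) i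
      have h2 : (p ++ [t]).length ≤ n := by
        have h3 := hnd.length_le_card
        rw [hll] at h3
        simp at h3 ⊢
        omega
      have h3 : ((p ++ [t]).length * e : ℕ) ≤ D := le_trans (Nat.mul_le_mul_right e h2) hne
      have h4 : (((p ++ [t]).length : ℕ) : ℤ) * e ≤ D := by exact_mod_cast h3
      exact h1.trans h4
    refine ⟨⟨v', q, s.x + w, s.act⟩, ⟨hc.chain, ?_, ?_, ?_, ?_, hp1, hA, ?_⟩, rfl, ?_⟩
    · intro τ hτ
      refine le_trans ?_ (hc.up τ hτ)
      rw [← hphil τ hτ]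
      refine phi_pop hd hD hc.chain hτ hw (bad (p ++ [t])) (bad_nonneg _) ?_ ?_ ?_
      · intro σ _
        simp only [psi]
        rw [hll, bad_append, dotProduct_add]
        ring
      · intro σ hσ hle
        apply bad_mono
        intro r hr hg
        exact (hlgd r (hsub r hr)).2 τ hg (mem_low.2 ⟨hσ, hle⟩)
      · intro h0
        apply lam_sign hN hτ hw
        have := hp2 τ hτ (bad_zero _ _ h0)
        simpa using this
    · rw [hpq] at hnd
      simp only [List.map_append, List.map_cons] at hnd
      have := (List.nodup_append.1 hnd).2.1
      rw [htv] at this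
      exact this
    · intro r hr; exact hlub r (hsubq r hr)
    · intro r hr; exact hlgd r (hsubq r hr)
    · intro τ h1 h2
      have a1 := h.out' τ h1 h2
      have a2 := CC_dot hD h1 hw
      have a3 := le_abs_self (τ ⬝ᵥ w)
      show τ ⬝ᵥ (s.x + w) < _
      rw [dotProduct_add]
      linarith
    · show s.x + w + usum q = _
      have : usum l = w + usum q := by rw [hll, usum_append]
      have h2 : usum l = u + usum s.stk := usum_cons _ _
      rw [add_assoc, ← this, h2]
      abel
  · refine ⟨⟨v', l, s.x, s.act⟩, ⟨hc.chain, ?_, List.nodup_cons.2 ⟨hv, hnd⟩, hlub, hlgd, hpath, hA,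
      hc.out⟩, rfl, ?_⟩
    · intro τ hτ
      show phi D n (psi D s.x l) s.act τ ≤ _
      rw [hphil τ hτ]
      exact hc.up τ hτ
    · show s.x + usum l = _
      have h2 : usum l = u + usum s.stk := usum_cons _ _
      rw [h2]; abel

theorem Inv.init {D n e : ℕ} (hd : 1 ≤ d) (hD : 1 ≤ D) (hn : 1 ≤ n) {N : ℤ}
    {A : V → Finset (Fin d → ℤ)} (v₀ : V) (hA : (A v₀).Nonempty) :
    Inv D n e N A ⟨v₀, [], 0, ∅⟩ := by
  refine ⟨⟨⟨by simp, by simp⟩, by simp, by simp, by simp, by simp, trivial, hA, ?_⟩, by simp, ?_⟩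
  · intro τ hτ _
    have := kc_pos hd hD hn hτ
    have := MM_pos hd hD
    simp
    linarith
  · intro τ hτ _
    have := kc_pos hd hD hn hτ
    simpa using this

theorem Core.bound {D n e : ℕ} (hd : 1 ≤ d) (hD : 1 ≤ D) (hn : 1 ≤ n)
    (hV : Fintype.card V ≤ n) (hne : n * e ≤ D) {N : ℤ}
    {A : V → Finset (Fin d → ℤ)} {s : St V d} (h : Core D n e N A s) (i : Fin d) :
    -(kR d D n * (((2 * D + 1) ^ d * D : ℕ) : ℤ) + D * (d + 1) * (8 * kX d D n) + D) ≤
      (s.x + usum s.stk) i := by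
  have hX := kX_pos hd hD hn
  have hG := kG_pos hd hD hn
  have hdot : ∀ w : Fin d → ℤ, (Pi.single i (-1) : Fin d → ℤ) ⬝ᵥ w = - w i := by
    intro w; simp
  have hQ : ∀ w ∈ WW d D, |(Pi.single i (-1) : Fin d → ℤ) ⬝ᵥ w| ≤ (D : ℤ) := by
    intro w hw
    rw [hdot, abs_neg]; exact mem_WW.1 hw i
  have h1 := dec hD (kR d D n) (8 * kX d D n) (by linarith) s.x (fun ν hν => by
    have a1 := h.K hd hD hn ν hν
    have a2 := kδ_ge hd hD hn (lev D ν)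
    linarith) (d + 1) (Pi.single i (-1)) D (by positivity)
    (by have := lev_le D (Pi.single i (-1) : Fin d → ℤ); omega) hQ
  rw [hdot] at h1
  have h2 : hf D (Pi.single i (-1) : Fin d → ℤ) ≤ (((2 * D + 1) ^ d * D : ℕ) : ℤ) := by
    unfold hf
    calc ∑ w ∈ WW d D, |(Pi.single i (-1) : Fin d → ℤ) ⬝ᵥ w| ≤ ∑ w ∈ WW d D, (D : ℤ) :=
          Finset.sum_le_sum hQ
      _ = (WW d D).card * D := by rw [Finset.sum_const, nsmul_eq_mul]
      _ = _ := by
          have : (WW d D).card = (2 * D + 1) ^ d := by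
            unfold WW
            rw [Pi.card_Icc]
            simp
            congr 1
            omega
          rw [this]; push_cast; ring
  have h3 : kR d D n * hf D (Pi.single i (-1) : Fin d → ℤ) ≤
      kR d D n * (((2 * D + 1) ^ d * D : ℕ) : ℤ) := by
    have a1 := kR_ge hd hD hn d le_rfl
    have a2 := kδ_ge hd hD hn d
    apply mul_le_mul_of_nonneg_left h2
    linarith
  have h4 := usum_bound s.stk e h.ub i
  have h5 : (s.stk.length : ℤ) * e ≤ D := by
    have h6 := h.len hV
    have : s.stk.length * e ≤ D := le_trans (Nat.mul_le_mul_right e (by omega)) hne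
    exact_mod_cast this
  have h6 := neg_le_abs (usum s.stk i)
  rw [Pi.add_apply]
  push_cast at h1 h3 ⊢
  linarith

end PLB

namespace PLB

open Matrix

/-! ### Part F: numerics and conclusion -/

theorem kmul {b x y : ℤ} {p q : ℕ} (hy0 : 0 ≤ y) (hb : 4 ≤ b) (hx : x ≤ b ^ p) (hy : y ≤ b ^ q) :
    x * y ≤ b ^ (p + q) := by
  rw [pow_add]
  exact mul_le_mul hx hy hy0 (by positivity)

theorem kup {b x : ℤ} {p q : ℕ} (hb : 4 ≤ b) (hx : x ≤ b ^ p) (hpq : p ≤ q) : x ≤ b ^ q :=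
  hx.trans (pow_le_pow_right₀ (by omega) hpq)

theorem kadd {b x y z : ℤ} {p : ℕ} (hb : 4 ≤ b) (hx : x ≤ b ^ p) (hy : y ≤ b ^ p)
    (hz : z ≤ b ^ p) : x + y + z ≤ b ^ (p + 1) := by
  have h : (0 : ℤ) ≤ b ^ p := by positivity
  rw [pow_succ]
  nlinarith

theorem d_le (d : ℕ) (hd : 1 ≤ d) : d + 2 ≤ 4 ^ d := by
  induction d, hd using Nat.le_induction with
  | base => norm_num
  | succ k hk ih => rw [pow_succ]; omega

theorem numer {d D n : ℕ} (hd : 1 ≤ d) (hD : 1 ≤ D) (hn : 1 ≤ n) (hnD : n ≤ D) :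
    kR d D n * (((2 * D + 1) ^ d * D : ℕ) : ℤ) + D * (d + 1) * (8 * kX d D n) + D ≤
      ((4 * D : ℕ) : ℤ) ^ (2 * (d + 2) ^ 3) := by
  obtain ⟨b, hbD⟩ : ∃ b : ℤ, b = ((4 * D : ℕ) : ℤ) := ⟨_, rfl⟩
  rw [← hbD]
  have hb : 4 ≤ b := by rw [hbD]; push_cast; omega
  have h1 : ∀ x : ℤ, x ≤ 4 → x ≤ b ^ 1 := fun x hx => by rw [pow_one]; omega
  have hDb : (D : ℤ) ≤ b ^ 1 := by rw [hbD, pow_one]; push_cast; omega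
  have hDb2 : (2 * D + 1 : ℤ) ≤ b := by rw [hbD]; push_cast; omega
  have hnb : (n : ℤ) ≤ b ^ 1 := by rw [hbD, pow_one]; push_cast; omega
  have hd2 : (d : ℤ) + 2 ≤ b ^ d := by
    have h : ((d + 2 : ℕ) : ℤ) ≤ ((4 ^ d : ℕ) : ℤ) := by exact_mod_cast d_le d hd
    push_cast at h
    exact h.trans (pow_le_pow_left₀ (by norm_num) hb d)
  have hfac : ((d.factorial : ℕ) : ℤ) ≤ b ^ (d * d) := by
    have h : ((d.factorial : ℕ) : ℤ) ≤ ((d ^ d : ℕ) : ℤ) := by exact_mod_cast Nat.factorial_le_pow d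
    push_cast at h
    refine h.trans ?_
    rw [pow_mul]
    exact pow_le_pow_left₀ (by positivity) (by omega) d
  have hDd : (D : ℤ) ^ d ≤ b ^ d := by
    rw [pow_one] at hDb
    exact pow_le_pow_left₀ (by positivity) hDb d
  have hM0 : 0 < MM d D := MM_pos hd hD
  have hX0 : 0 < kX d D n := kX_pos hd hD hn
  have hG0 : 0 < kG d D n := kG_pos hd hD hn
  obtain ⟨m, hm⟩ : ∃ m : ℕ, m = (d + 1) * (d + 1) := ⟨_, rfl⟩
  have hM : MM d D ≤ b ^ m := by
    unfold MM
    push_cast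
    refine kup hb (kmul (by positivity) hb (kmul (by positivity) hb (p := d) (by omega)
      (kmul (by positivity) hb hfac hDd)) hDb) ?_
    rw [hm]; apply le_of_eq; ring
  have hX : 8 * kX d D n ≤ b ^ (4 + d + 2 * m) := by
    have hA : kA d D ≤ b ^ (1 + d + m) := by
      unfold kA
      exact kmul hM0.le hb (kmul (by positivity) hb (h1 3 (by norm_num)) (by omega)) hM
    have h8 : (8 : ℤ) ≤ b ^ 2 := by nlinarith
    have : kX d D n ≤ b ^ (1 + d + m + m + 1) := by
      unfold kX
      exact kmul (by positivity) hb (kmul hM0.le hb hA hM) hnb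
    exact kup hb (kmul hX0.le hb h8 this) (by omega)
  have hG : kG d D n ≤ b ^ (5 + 2 * d + 3 * m + 1) := by
    unfold kG
    refine kadd hb ?_ ?_ ?_
    · exact kup hb (kmul (by positivity) hb (h1 2 (by norm_num)) hX) (by omega)
    · exact kup hb (kmul (by positivity) hb (kmul (by positivity) hb
        (kmul hM0.le hb (h1 2 (by norm_num)) hM) hd2) hX) (by omega)
    · exact one_le_pow₀ (by omega)
  have h3M : (3 * MM d D) ^ (d + 1) ≤ b ^ ((1 + m) * (d + 1)) := by
    rw [pow_mul]
    exact pow_le_pow_left₀ (by positivity) (kmul hM0.le hb (h1 3 (by norm_num)) hM) _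
  have hR : kR d D n ≤ b ^ (5 + 2 * d + 3 * m + 1 + (1 + m) * (d + 1) + 1) := by
    have := kadd hb (kmul (by positivity) hb hG h3M)
      (kup hb hG (Nat.le_add_right _ ((1 + m) * (d + 1)))) (z := 0) (by positivity)
    rw [add_zero] at this
    exact this
  obtain ⟨q, hq⟩ : ∃ q : ℕ, q = (1 + m) * (d + 1) := ⟨_, rfl⟩
  rw [← hq] at hR
  have hW : (((2 * D + 1) ^ d * D : ℕ) : ℤ) ≤ b ^ (d + 1) := by
    push_cast
    exact kmul (by positivity) hb (pow_le_pow_left₀ (by positivity) hDb2 d) hDb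
  have hfin := kadd hb (kmul (by positivity) hb hR hW)
    (y := D * (d + 1) * (8 * kX d D n)) (z := D)
    (kup hb (kmul (by positivity) hb (kmul (by positivity) hb hDb
      (show (d : ℤ) + 1 ≤ b ^ d by omega)) hX) (by omega))
    (kup hb hDb (by omega))
  refine kup hb hfin ?_
  rw [hq, hm]
  have : 1 ≤ d * d := Nat.mul_pos hd hd
  have h3 : 1 ≤ d * d * d := Nat.mul_pos this hd
  nlinarith

theorem main (G : MWG V d) (hE : 0 < _root_.enorm G) (v₀ : V) (b : Fin d → ℕ)
    (hw : P1WinsEnergy G b v₀) :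
    ∃ b : Fin d → ℕ,
      (Finset.univ.sup b) ≤ (4 * Fintype.card V * _root_.enorm G) ^ (2 * (d + 2)^3) ∧
      P1WinsEnergy G b v₀ := by
  classical
  rcases Nat.eq_zero_or_pos d with hd0 | hd
  · subst hd0
    exact ⟨b, by simp, hw⟩
  obtain ⟨A, hA0, hA1, hA2⟩ := family G v₀ b hw
  obtain ⟨n, hn⟩ : ∃ n : ℕ, n = Fintype.card V := ⟨_, rfl⟩
  obtain ⟨e, he⟩ : ∃ e : ℕ, e = _root_.enorm G := ⟨_, rfl⟩
  rw [← he] at hE hA1 hA2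
  rw [mul_assoc, ← hn, ← he]
  have hn1 : 1 ≤ n := by rw [hn]; exact Fintype.card_pos_iff.mpr ⟨v₀⟩
  have hV : Fintype.card V ≤ n := hn.ge
  obtain ⟨D, hDe⟩ : ∃ D : ℕ, D = n * e := ⟨_, rfl⟩
  rw [← hDe]
  have hD : 1 ≤ D := by rw [hDe]; exact Nat.mul_pos hn1 hE
  have hnD : n ≤ D := by rw [hDe]; exact Nat.le_mul_of_pos_right _ hE
  have hne : n * e ≤ D := hDe.ge
  obtain ⟨N, hN, hNA⟩ := exists_N D A
  refine ⟨fun _ => (4 * D) ^ (2 * (d + 2) ^ 3), Finset.sup_le fun _ _ => le_rfl, ?_⟩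
  have step : ∀ s : St V d, Inv D n e N A s → ∀ a ∈ A s.v,
      (∀ τ ∈ s.act, pot D N (low D s.act τ) (A s.v) = lam D N (low D s.act τ) a) →
      ∀ v' u', (∀ i, |u' i| ≤ (e : ℤ)) → a + u' ∈ A v' →
      ∃ s' : {s : St V d // Inv D n e N A s}, s'.1.v = v' ∧
        s'.1.x + usum s'.1.stk = s.x + usum s.stk + u' := by
    intro s hs a ha hbest v' u' hu' hau
    obtain ⟨s1, hc1, hv1, hx1⟩ := hs.move hd hD hV hne hN v' u' hu' ⟨_, hau⟩ (by
      intro τ hτ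
      rw [hbest τ hτ]
      have := le_pot D N (low D s.act τ) hau
      rw [lam_add] at this
      linarith)
    obtain ⟨s2, hi2, hv2, hx2⟩ := hc1.update hd hD hn1 hV
    exact ⟨⟨s2, hi2⟩, hv2.trans hv1, hx2.trans hx1⟩
  refine machine G v₀ {s : St V d // Inv D n e N A s} (fun s => s.1.v)
    (fun s => s.1.x + usum s.1.stk) ⟨_, Inv.init hd hD hn1 v₀ hA0⟩ rfl (by simp [usum]) _ ?_ ?_ ?_
  · rintro ⟨s, hs⟩ i
    have h1 := hs.core.bound hd hD hn1 hV hne i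
    have h2 := numer hd hD hn1 hnD
    push_cast at h1 h2 ⊢
    linarith
  · rintro ⟨s, hs⟩ hv
    obtain ⟨a, ha, hbest⟩ := exists_best hD hN hs.core.chain hs.core.ne (hNA s.v)
    obtain ⟨u, v', u', hed, hle, hu', hau⟩ := hA1 _ hv a ha
    obtain ⟨s', hv', hx'⟩ := step s hs a ha hbest v' u' hu' hau
    refine ⟨u, s', ?_, ?_⟩
    · simp only [hv']; exact hed
    · simp only [hx']; gcongr
  · rintro ⟨s, hs⟩ hv u v' hed
    obtain ⟨a, ha, hbest⟩ := exists_best hD hN hs.core.chain hs.core.ne (hNA s.v)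
    obtain ⟨u', hle, hu', hau⟩ := hA2 _ hv a ha u v' hed
    obtain ⟨s', hv', hx'⟩ := step s hs a ha hbest v' u' hu' hau
    refine ⟨s', hv', ?_⟩
    simp only [hx']; gcongr

end PLB

/-- Pareto limit bound: if some initial credit `b ∈ ℕ^d`
lets Player 1 win the energy game from `v₀`, then some initial credit of norm
at most `(4|V|·‖E‖)^(2(d+2)³)` does. -/
theorem pareto_limit_bound
    (V : Type) [Fintype V] [DecidableEq V] (d : ℕ) (G : MWG V d)
    (hE : 0 < enorm G) (v₀ : V)
    (hwin : ∃ b : Fin d → ℕ, P1WinsEnergy G b v₀) :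
    ∃ b : Fin d → ℕ,
      (Finset.univ.sup b) ≤ (4 * Fintype.card V * enorm G) ^ (2 * (d + 2)^3) ∧
      P1WinsEnergy G b v₀ := by
  obtain ⟨b, hb⟩ := hwin
  exact PLB.main G hE v₀ b hb
end

section
/- Let ⟨V,E,d⟩ be a multi-weighted game graph in which every cycle contains at least one Player-1 vertex, and let σ be a strategy of Player 2 from a vertex v₀ in the first-cycle bounding game G⟨V,E,d⟩. Define the strategy σ̃ of Player 2 in the bounding game Γ⟨V,E,d⟩ which, at any Player-2 vertex, chooses the edge specified by σ, and whenever a cycle is formed, cuts it out of its memory and continues playing according to σ. If σ is winning for Player 2 in G⟨V,E,d⟩ from v₀, then σ̃ is winning for Player 2 in Γ⟨V,E,d⟩ from v₀. -/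
variable {V : Type} [Fintype V] [DecidableEq V] {d : ℕ}

/-! Perfect half-spaces in `ℚ^d`. -/

/-- Vectors of `ℚ^d`. -/
abbrev QVec (d : ℕ) := Fin d → ℚ

/-- The entries of `v` all have absolute value at most `M`. -/
def QNormLe (M : ℕ) {d : ℕ} (v : QVec d) : Prop := ∀ i, |v i| ≤ (M : ℚ)

/-- A subspace of `ℚ^d` is `M`-generated if it is spanned by a set of vectors
of norm at most `M`. -/
def MGenSpace (M : ℕ) {d : ℕ} (S : Submodule ℚ (QVec d)) : Prop :=
  ∃ B : Set (QVec d), (∀ v ∈ B, QNormLe M v) ∧ Submodule.span ℚ B = S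

/-- `H` is an open half-space of the subspace `S`: the set of points of `S` on
which some linear functional, not vanishing identically on `S`, is negative. -/
def IsOpenHalfOf {d : ℕ} (S : Submodule ℚ (QVec d)) (H : Set (QVec d)) : Prop :=
  ∃ f : QVec d →ₗ[ℚ] ℚ, (∃ v ∈ S, f v ≠ 0) ∧ H = {v | v ∈ S ∧ f v < 0}

/-- `H` is an `M`-generated open half-space of the subspace `S`: moreover its
boundary is the span of a set of vectors of norm at most `M`. -/
def IsMGenHalfOf (M : ℕ) {d : ℕ} (S : Submodule ℚ (QVec d)) (H : Set (QVec d)) : Prop :=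
  ∃ f : QVec d →ₗ[ℚ] ℚ, (∃ v ∈ S, f v ≠ 0) ∧ H = {v | v ∈ S ∧ f v < 0} ∧
    ∃ B : Set (QVec d), (∀ v ∈ B, QNormLe M v) ∧
      (Submodule.span ℚ B : Set (QVec d)) = {v | v ∈ S ∧ f v = 0}

/-- Auxiliary chain of subspaces: `chainAux d f i` is the subspace obtained
from `ℚ^d` by intersecting with the kernels of `f d, f (d-1), …, f (d-i+1)`. -/
def chainAux (d : ℕ) (f : ℕ → (QVec d →ₗ[ℚ] ℚ)) : ℕ → Submodule ℚ (QVec d)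
  | 0 => ⊤
  | (i+1) => chainAux d f i ⊓ LinearMap.ker (f (d - i))

/-- `chainSub d f j` is the subspace on which the component half-space `H_j`
lives: `chainSub d f d = ℚ^d` and `chainSub d f j = chainSub d f (j+1) ∩ ker (f (j+1))`. -/
def chainSub (d : ℕ) (f : ℕ → (QVec d →ₗ[ℚ] ℚ)) (j : ℕ) : Submodule ℚ (QVec d) :=
  chainAux d f (d - j)

/-- The component open half-space `H_j = {v ∈ S_j | f j v < 0}`. -/
def halfComp (d : ℕ) (f : ℕ → (QVec d →ₗ[ℚ] ℚ)) (j : ℕ) : Set (QVec d) :=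
  {v | v ∈ chainSub d f j ∧ f j v < 0}

/-- The boundary of the component half-space `H_j`. -/
def bdComp (d : ℕ) (f : ℕ → (QVec d →ₗ[ℚ] ℚ)) (j : ℕ) : Set (QVec d) :=
  {v | v ∈ chainSub d f j ∧ f j v = 0}

/-- The chain condition: for `k ≤ j ≤ d`, the functional `f j` does not vanish
identically on `S_j`, so that each `H_j` is a `j`-dimensional open half-space
of `S_j`. -/
def ChainCond (d k : ℕ) (f : ℕ → (QVec d →ₗ[ℚ] ℚ)) : Prop :=
  ∀ j, k ≤ j → j ≤ d → ∃ v ∈ chainSub d f j, f j v ≠ 0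

/-- The union `H_d ∪ ⋯ ∪ H_k`. -/
def PPHSSet (d k : ℕ) (f : ℕ → (QVec d →ₗ[ℚ] ℚ)) : Set (QVec d) :=
  ⋃ j ∈ Set.Icc k d, halfComp d f j

/-- `A` is a `k`-perfect half-space of `ℚ^d` (for `k = d+1`, the empty set). -/
def IsPPHS (d k : ℕ) (A : Set (QVec d)) : Prop :=
  1 ≤ k ∧ k ≤ d + 1 ∧ ∃ f, ChainCond d k f ∧ A = PPHSSet d k f

/-- `A` is a partially-perfect half-space of `ℚ^d`. -/
def IsPartialPHS (d : ℕ) (A : Set (QVec d)) : Prop := ∃ k, IsPPHS d k A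

/-- `A` is an `M`-generated `k`-perfect half-space of `ℚ^d`: each component
open half-space has an `M`-generated boundary. -/
def IsMGenPPHS (M d k : ℕ) (A : Set (QVec d)) : Prop :=
  1 ≤ k ∧ k ≤ d + 1 ∧ ∃ f, ChainCond d k f ∧
    (∀ j, k ≤ j → j ≤ d → ∃ B : Set (QVec d), (∀ v ∈ B, QNormLe M v) ∧
      (Submodule.span ℚ B : Set (QVec d)) = bdComp d f j) ∧
    A = PPHSSet d k f

/-- `A` is an `M`-generated perfect half-space of `ℚ^d`. -/
def IsMGenPerfectHS (M d : ℕ) (A : Set (QVec d)) : Prop := IsMGenPPHS M d 1 A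

/-! The first-cycle bounding game `G⟨V,E,d⟩`. -/

/-- A colour: a set of vectors of `ℚ^d` (intended: a perfect half-space). -/
abbrev Colour (d : ℕ) := Set (QVec d)

/-- A coloured history: past configurations, each together with the colour
chosen by Player 2 at it if it is a Player-1 vertex. -/
abbrev CHist (V : Type) (d : ℕ) := List (Conf V d × Option (Colour d))

variable {V : Type} [Fintype V] [DecidableEq V] {d : ℕ}

/-- Record a colour at a configuration: only Player-1 vertices are coloured. -/
def colOpt (G : MWG V d) (c : Conf V d) (H : Colour d) : Option (Colour d) :=
  if c.1 ∈ G.P1 then some H else none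

/-- The coloured history before instant `n` of a play `ρ` with colour
choices `χ`. -/
def chist (G : MWG V d) (ρ : ℕ → Conf V d) (χ : ℕ → Colour d) (n : ℕ) : CHist V d :=
  (List.range n).map fun j => (ρ j, colOpt G (ρ j) (χ j))

/-- A strategy of Player 2 in the first-cycle bounding game: at Player-1
vertices choose a colour, at Player-2 vertices choose a move. -/
structure FCStratP2 (V : Type) (d : ℕ) where
  col : CHist V d → Conf V d → Colour d
  edge : CHist V d → Conf V d → (Fin d → ℤ) × V

/-- A strategy of Player 1 in the first-cycle bounding game: at Player-1
vertices, given moreover the colour just chosen by Player 2, choose a move. -/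
abbrev FCStratP1 (V : Type) (d : ℕ) :=
  CHist V d → Conf V d → Colour d → (Fin d → ℤ) × V

/-- Validity of a Player 2 first-cycle strategy: colours are
`|V|·‖E‖`-generated perfect half-spaces of `ℚ^d`, and moves at Player-2
vertices follow edges of the graph. -/
def ValidFCP2 (G : MWG V d) (σ : FCStratP2 V d) : Prop :=
  (∀ h c, c.1 ∈ G.P1 →
    IsMGenPerfectHS (Fintype.card V * enorm G) d (σ.col h c)) ∧
  (∀ h c, c.1 ∉ G.P1 → (c.1, (σ.edge h c).1, (σ.edge h c).2) ∈ G.E)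

/-- Validity of a Player 1 first-cycle strategy: moves at Player-1 vertices
follow edges of the graph. -/
def ValidFCP1 (G : MWG V d) (τ : FCStratP1 V d) : Prop :=
  ∀ h c H, c.1 ∈ G.P1 → (c.1, (τ h c H).1, (τ h c H).2) ∈ G.E

/-- The colours chosen along a play are legal moves of the first-cycle game:
at every Player-1 vertex, a `|V|·‖E‖`-generated perfect half-space. -/
def LegalCols (G : MWG V d) (ρ : ℕ → Conf V d) (χ : ℕ → Colour d) : Prop :=
  ∀ n, (ρ n).1 ∈ G.P1 → IsMGenPerfectHS (Fintype.card V * enorm G) d (χ n)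

/-- Consistency of a coloured play with a Player 2 first-cycle strategy. -/
def FCConsistentP2 (G : MWG V d) (σ : FCStratP2 V d)
    (ρ : ℕ → Conf V d) (χ : ℕ → Colour d) : Prop :=
  ∀ n, ((ρ n).1 ∈ G.P1 → χ n = σ.col (chist G ρ χ n) (ρ n)) ∧
    ((ρ n).1 ∉ G.P1 →
      ρ (n+1) = ((σ.edge (chist G ρ χ n) (ρ n)).2,
                 (ρ n).2 + (σ.edge (chist G ρ χ n) (ρ n)).1))

/-- Consistency of a coloured play with a Player 1 first-cycle strategy. -/
def FCConsistentP1 (G : MWG V d) (τ : FCStratP1 V d)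
    (ρ : ℕ → Conf V d) (χ : ℕ → Colour d) : Prop :=
  ∀ n, (ρ n).1 ∈ G.P1 →
    ρ (n+1) = ((τ (chist G ρ χ n) (ρ n) (χ n)).2,
               (ρ n).2 + (τ (chist G ρ χ n) (ρ n) (χ n)).1)

/-- `n₀ < n₁` witness the first time a vertex is visited twice along `ρ`,
producing the first (simple) cycle of the play. -/
def FirstRepeat (ρ : ℕ → Conf V d) (n₀ n₁ : ℕ) : Prop :=
  n₀ < n₁ ∧ (ρ n₀).1 = (ρ n₁).1 ∧ ∀ i j, i < j → j < n₁ → (ρ i).1 ≠ (ρ j).1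

/-- Cast an integer vector into `ℚ^d`. -/
def intQ {d : ℕ} (u : Fin d → ℤ) : QVec d := fun i => (u i : ℚ)

/-- Player 2 wins the first cycle (from `n₀` to `n₁`): its total weight lies
in the largest partially-perfect half-space of `ℚ^d` contained in all the
colours occurring in the cycle. -/
def CycleWinP2 (G : MWG V d) (ρ : ℕ → Conf V d) (χ : ℕ → Colour d)
    (n₀ n₁ : ℕ) : Prop :=
  ∃ A : Colour d, IsPartialPHS d A ∧
    (∀ j, n₀ ≤ j → j < n₁ → (ρ j).1 ∈ G.P1 → A ⊆ χ j) ∧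
    (∀ B : Colour d, IsPartialPHS d B →
      (∀ j, n₀ ≤ j → j < n₁ → (ρ j).1 ∈ G.P1 → B ⊆ χ j) → B ⊆ A) ∧
    intQ ((ρ n₁).2 - (ρ n₀).2) ∈ A

/-- Player 2 wins the first-cycle bounding game from `v₀`. -/
def P2WinsFC (G : MWG V d) (v₀ : V) : Prop :=
  ∃ σ : FCStratP2 V d, ValidFCP2 G σ ∧
    ∀ ρ χ, IsPlay G v₀ ρ → LegalCols G ρ χ → FCConsistentP2 G σ ρ χ →
      ∀ n₀ n₁, FirstRepeat ρ n₀ n₁ → CycleWinP2 G ρ χ n₀ n₁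

/-- Player 1 wins the first-cycle bounding game from `v₀`. -/
def P1WinsFC (G : MWG V d) (v₀ : V) : Prop :=
  ∃ τ : FCStratP1 V d, ValidFCP1 G τ ∧
    ∀ ρ χ, IsPlay G v₀ ρ → LegalCols G ρ χ → FCConsistentP1 G τ ρ χ →
      ∀ n₀ n₁, FirstRepeat ρ n₀ n₁ → ¬ CycleWinP2 G ρ χ n₀ n₁

/-! The strategy `σ̃` of Player 2 in the bounding game obtained from a
strategy `σ` of Player 2 in the first-cycle bounding game: at Player-2
vertices it chooses the edge specified by `σ` (for the coloured simple path
kept in its memory), and whenever a cycle is formed it cuts it out of its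
memory and continues playing according to `σ`. -/

variable {V : Type} [Fintype V] [DecidableEq V] {d : ℕ}

/-- One memory update: from memory `(h, c)` (the coloured simple path `h`
followed by the current virtual configuration `c`), after the move `uv`,
append `c` (with the colour `σ` chooses at it, if it is a Player-1 vertex);
if the new vertex closes a cycle, cut the cycle out of the memory, going back
to the earlier occurrence of that vertex. -/
def stepMem (G : MWG V d) (σ : FCStratP2 V d) :
    CHist V d × Conf V d → ((Fin d → ℤ) × V) → CHist V d × Conf V d :=
  fun m uv =>
    let h := m.1
    let c := m.2
    let c' : Conf V d := (uv.2, c.2 + uv.1)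
    let h' := h ++ [(c, colOpt G c (σ.col h c))]
    match h'.findIdx? (fun e => decide (e.1.1 = uv.2)) with
    | none => (h', c')
    | some j => (h'.take j, (h'.getD j (c', none)).1)

/-- The memory reached after the real history `c₀ :: rest`: fold the memory
update along the moves of the real play (the fold state also records the last
real configuration, in order to recover the weights of the moves). -/
def memFold (G : MWG V d) (σ : FCStratP2 V d) (c₀ : Conf V d)
    (rest : List (Conf V d)) : (CHist V d × Conf V d) × Conf V d :=
  rest.foldl (fun s c => (stepMem G σ s.1 (c.2 - s.2.2, c.1), c)) (([], c₀), c₀)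

/-- The strategy `σ̃` of Player 2 in the bounding game induced by the
first-cycle strategy `σ`: it plays the edge that `σ` specifies for the
coloured simple path in its memory. -/
def tildeStrat (G : MWG V d) (σ : FCStratP2 V d) : Strat V d :=
  fun h c =>
    match h with
    | [] => σ.edge [] c
    | c₀ :: rest =>
        let m := (memFold G σ c₀ (rest ++ [c])).1
        σ.edge m.1 m.2

/-! Auxiliary material for the proof. -/

namespace TW

/-- Abstract properties of partially perfect half-spaces. -/
def Good (A : Set (QVec d)) : Prop :=
  (∀ x, x ∈ A → -x ∈ A → False) ∧ (∀ a ∈ A, ∀ x, -x ∈ A ∨ a + x ∈ A)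

theorem Good.zero {A : Set (QVec d)} (h : Good A) : (0 : QVec d) ∉ A :=
  fun h0 => h.1 0 h0 (by simpa using h0)

theorem good_add {A B H : Set (QVec d)} (hA : Good A) (hH : Good H)
    (hAH : A ⊆ H) (hBH : B ⊆ H) {a b : QVec d} (ha : a ∈ A) (hb : b ∈ B) : a + b ∈ A := by
  rcases hA.2 a ha b with h | h
  · exact (hH.1 b (hBH hb) (hAH h)).elim
  · exact h

theorem chainAux_mem (f : ℕ → (QVec d →ₗ[ℚ] ℚ)) (n : ℕ) (v : QVec d) :
    v ∈ chainAux d f n ↔ ∀ i < n, f (d - i) v = 0 := by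
  induction n with
  | zero => simp [chainAux]
  | succ n ih =>
    simp only [chainAux, Submodule.mem_inf, ih, LinearMap.mem_ker]
    constructor
    · rintro ⟨h1, h2⟩ i hi
      rcases Nat.lt_succ_iff_lt_or_eq.1 hi with h | h
      · exact h1 i h
      · rw [h]; exact h2
    · intro h
      exact ⟨fun i hi => h i (by omega), h n (by omega)⟩

theorem chainSub_mem (f : ℕ → (QVec d →ₗ[ℚ] ℚ)) (j : ℕ) (v : QVec d) :
    v ∈ chainSub d f j ↔ ∀ i, j < i → i ≤ d → f i v = 0 := by
  rw [chainSub, chainAux_mem]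
  constructor
  · intro h i h1 h2
    have := h (d - i) (by omega)
    rwa [Nat.sub_sub_self h2] at this
  · intro h i hi
    exact h (d - i) (by omega) (by omega)

theorem mem_PPHS (k : ℕ) (f : ℕ → (QVec d →ₗ[ℚ] ℚ)) (v : QVec d) :
    v ∈ PPHSSet d k f ↔
      ∃ j, k ≤ j ∧ j ≤ d ∧ (∀ i, j < i → i ≤ d → f i v = 0) ∧ f j v < 0 := by
  simp only [PPHSSet, halfComp, Set.mem_iUnion, Set.mem_Icc, Set.mem_setOf_eq, chainSub_mem]
  constructor
  · rintro ⟨j, ⟨h1, h2⟩, h3, h4⟩; exact ⟨j, h1, h2, h3, h4⟩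
  · rintro ⟨j, h1, h2, h3, h4⟩; exact ⟨j, ⟨h1, h2⟩, h3, h4⟩

theorem good_PPHS (k : ℕ) (f : ℕ → (QVec d →ₗ[ℚ] ℚ)) : Good (PPHSSet d k f) := by
  constructor
  · intro x hx hnx
    rw [mem_PPHS] at hx hnx
    obtain ⟨j, h1, h2, h3, h4⟩ := hx
    obtain ⟨i, g1, g2, g3, g4⟩ := hnx
    simp only [map_neg, neg_eq_zero] at g3 g4
    rcases lt_trichotomy i j with h | h | h
    · rw [g3 j h h2] at h4; exact lt_irrefl _ h4
    · subst h; linarith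
    · rw [h3 i h g2] at g4; simp at g4
  · intro a ha x
    simp only [mem_PPHS] at ha ⊢
    obtain ⟨j, h1, h2, h3, h4⟩ := ha
    by_cases hx : ∃ i, j < i ∧ i ≤ d ∧ f i x ≠ 0
    · obtain ⟨i0, hi0⟩ := hx
      classical
      let P : ℕ → Prop := fun i => j < i ∧ i ≤ d ∧ f i x ≠ 0
      have hP : P (Nat.findGreatest P d) := Nat.findGreatest_spec (P := P) hi0.2.1 hi0
      have hmax : ∀ i, Nat.findGreatest P d < i → i ≤ d → f i x = 0 := by
        intro i hi hid
        by_contra hne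
        exact Nat.findGreatest_is_greatest hi hid ⟨lt_trans hP.1 hi, hid, hne⟩
      generalize Nat.findGreatest P d = i at hP hmax
      obtain ⟨e1, e2, e3⟩ := hP
      rcases lt_or_gt_of_ne e3 with h | h
      · right
        refine ⟨i, by omega, e2, fun i' a1 a2 => ?_, ?_⟩
        · rw [map_add, hmax i' a1 a2, h3 i' (by omega) a2, add_zero]
        · rw [map_add, h3 i e1 e2, zero_add]; exact h
      · left
        refine ⟨i, by omega, e2, fun i' a1 a2 => ?_, ?_⟩
        · rw [map_neg, hmax i' a1 a2, neg_zero]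
        · rw [map_neg]; linarith
    · push Not at hx
      rcases le_or_gt (f j x) 0 with h | h
      · right
        refine ⟨j, h1, h2, fun i' a1 a2 => ?_, ?_⟩
        · rw [map_add, hx i' a1 a2, h3 i' a1 a2, add_zero]
        · rw [map_add]; linarith
      · left
        refine ⟨j, h1, h2, fun i' a1 a2 => ?_, ?_⟩
        · rw [map_neg, hx i' a1 a2, neg_zero]
        · rw [map_neg]; linarith

/-- Memory states. -/
abbrev Mem (V : Type) (d : ℕ) := CHist V d × Conf V d

/-- The memory state at depth `i` of the stack. -/
def st (m : Mem V d) (i : ℕ) : Mem V d :=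
  if h : i < m.1.length then (m.1.take i, (m.1[i]).1) else m

def push (G : MWG V d) (σ : FCStratP2 V d) (m : Mem V d) (c' : Conf V d) : Mem V d :=
  (m.1 ++ [(m.2, colOpt G m.2 (σ.col m.1 m.2))], c')

def forced (σ : FCStratP2 V d) (m : Mem V d) : Conf V d :=
  ((σ.edge m.1 m.2).2, m.2.2 + (σ.edge m.1 m.2).1)

theorem st_ge (m : Mem V d) {i : ℕ} (h : m.1.length ≤ i) : st m i = m := by
  simp [st, Nat.not_lt.2 h]

theorem st_len (m : Mem V d) {i : ℕ} (h : i ≤ m.1.length) : (st m i).1.length = i := by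
  unfold st
  split_ifs with h'
  · simp; omega
  · omega

theorem st_st (m : Mem V d) {i j : ℕ} (hij : i ≤ j) (hj : j ≤ m.1.length) :
    st (st m j) i = st m i := by
  rcases Nat.lt_or_ge j m.1.length with h | h
  · rcases Nat.lt_or_ge i j with h' | h'
    · have hi : i < m.1.length := by omega
      have e : st m j = (m.1.take j, (m.1[j]).1) := by simp [st, h]
      rw [e]
      unfold st
      have : i < (List.take j m.1).length := by simp; omega
      simp [this, hi, List.take_take, Nat.min_eq_left hij, h']
    · have : i = j := by omega
      subst this
      rw [st_ge]
      rw [st_len m hj]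
  · rw [st_ge m h]

theorem push_len (G : MWG V d) (σ : FCStratP2 V d) (m : Mem V d) (c' : Conf V d) :
    (push G σ m c').1.length = m.1.length + 1 := by
  simp [push]

theorem st_push (G : MWG V d) (σ : FCStratP2 V d) (m : Mem V d) (c' : Conf V d) {i : ℕ}
    (h : i ≤ m.1.length) : st (push G σ m c') i = st m i := by
  rcases Nat.lt_or_ge i m.1.length with h' | h'
  · have : i < (push G σ m c').1.length := by rw [push_len]; omega
    unfold st
    simp only [this, h', dif_pos]
    simp [push, List.getElem_append_left, h', List.take_append_of_le_length h]
  · have : i = m.1.length := by omega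
    subst this
    have : m.1.length < (push G σ m c').1.length := by rw [push_len]; omega
    unfold st
    simp only [this, dif_pos]
    simp [push]

theorem stepMem_cases (G : MWG V d) (σ : FCStratP2 V d) (m : Mem V d) (uv : (Fin d → ℤ) × V) :
    ((∀ i ≤ m.1.length, (st m i).2.1 ≠ uv.2) ∧
      stepMem G σ m uv = push G σ m (uv.2, m.2.2 + uv.1)) ∨
    ∃ j ≤ m.1.length, (st m j).2.1 = uv.2 ∧ stepMem G σ m uv = st m j := by
  have key : ∀ i (hi : i < (m.1 ++ [(m.2, colOpt G m.2 (σ.col m.1 m.2))]).length),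
      st m i = ((m.1 ++ [(m.2, colOpt G m.2 (σ.col m.1 m.2))]).take i,
        ((m.1 ++ [(m.2, colOpt G m.2 (σ.col m.1 m.2))])[i]).1) := by
    intro i hi
    rw [← st_push G σ m m.2 (i := i) (by simp at hi; omega)]
    unfold st
    have : i < (push G σ m m.2).1.length := hi
    simp only [this, dif_pos]
    rfl
  have hl : (m.1 ++ [(m.2, colOpt G m.2 (σ.col m.1 m.2))]).length = m.1.length + 1 := by simp
  unfold stepMem
  dsimp only
  rcases hf : List.findIdx? (fun e => decide (e.1.1 = uv.2))
    (m.1 ++ [(m.2, colOpt G m.2 (σ.col m.1 m.2))]) with _ | j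
  · left
    have hg := hf
    rw [List.findIdx?_eq_none_iff] at hf
    refine ⟨fun i hi he => ?_, by rw [hg]; rfl⟩
    rw [key i (by omega)] at he
    have := hf _ (List.getElem_mem (by omega : i < _))
    exact of_decide_eq_false this he
  · right
    have hg := hf
    rw [List.findIdx?_eq_some_iff_getElem] at hf
    obtain ⟨hj, h1, -⟩ := hf
    refine ⟨j, by omega, ?_, ?_⟩
    · rw [key j hj]; simpa using h1
    · rw [key j hj, hg]
      simp only [List.getD_eq_getElem _ _ hj]

theorem stepMem_vertex (G : MWG V d) (σ : FCStratP2 V d) (m : Mem V d)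
    (uv : (Fin d → ℤ) × V) : (stepMem G σ m uv).2.1 = uv.2 := by
  rcases stepMem_cases G σ m uv with ⟨-, h⟩ | ⟨j, -, h1, h⟩
  · rw [h]; rfl
  · rw [h, h1]

/-- Reachable memory states. -/
inductive R (G : MWG V d) (σ : FCStratP2 V d) (v₀ : V) : Mem V d → Prop
  | init : R G σ v₀ ([], (v₀, 0))
  | step (m : Mem V d) (c' : Conf V d) : R G σ v₀ m → Step G m.2 c' →
      (m.2.1 ∉ G.P1 → c' = forced σ m) → R G σ v₀ (push G σ m c')

/-- The trajectory when Player 1 moves according to `τ`. -/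
def traj (G : MWG V d) (σ : FCStratP2 V d) (v₀ : V) (τ : Mem V d → Conf V d) : ℕ → Mem V d
  | 0 => ([], (v₀, 0))
  | n + 1 => push G σ (traj G σ v₀ τ n)
      (if (traj G σ v₀ τ n).2.1 ∈ G.P1 then τ (traj G σ v₀ τ n) else forced σ (traj G σ v₀ τ n))

theorem traj_len (G : MWG V d) (σ : FCStratP2 V d) (v₀ : V) (τ : Mem V d → Conf V d) (n : ℕ) :
    (traj G σ v₀ τ n).1.length = n := by
  induction n with
  | zero => rfl
  | succ n ih => rw [traj, push_len, ih]

theorem st_traj (G : MWG V d) (σ : FCStratP2 V d) (v₀ : V) (τ : Mem V d → Conf V d) (n i : ℕ)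
    (h : i ≤ n) : st (traj G σ v₀ τ n) i = traj G σ v₀ τ i := by
  induction n with
  | zero =>
    obtain rfl : i = 0 := by omega
    rfl
  | succ n ih =>
    rcases Nat.lt_or_ge i (n + 1) with h' | h'
    · rw [traj, st_push _ _ _ _ (by rw [traj_len]; omega), ih (by omega)]
    · obtain rfl : i = n + 1 := by omega
      rw [st_ge]; rw [traj_len]

theorem exists_traj (G : MWG V d) (σ : FCStratP2 V d) (v₀ : V) (m : Mem V d)
    (h : R G σ v₀ m) : ∃ τ : Mem V d → Conf V d, (∀ m, Step G m.2 (τ m)) ∧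
      traj G σ v₀ τ m.1.length = m := by
  classical
  induction h with
  | init =>
    have : ∀ m : Mem V d, ∃ c', Step G m.2 c' := by
      intro m
      obtain ⟨u, v', h⟩ := G.serial m.2.1
      exact ⟨(v', m.2.2 + u), by simpa [Step] using h⟩
    choose τ hτ using this
    exact ⟨τ, hτ, rfl⟩
  | step m c' hm hs hf ih =>
    obtain ⟨τ, hτ, ht⟩ := ih
    refine ⟨Function.update τ m c', ?_, ?_⟩
    · intro x
      by_cases hx : x = m
      · subst hx; simpa using hs
      · simpa [hx] using hτ x
    · have agree : ∀ n ≤ m.1.length,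
          traj G σ v₀ (Function.update τ m c') n = traj G σ v₀ τ n := by
        intro n
        induction n with
        | zero => intro _; rfl
        | succ n ihn =>
          intro hn
          rw [traj, traj, ihn (by omega)]
          have : traj G σ v₀ τ n ≠ m := by
            intro he
            have := traj_len G σ v₀ τ n
            rw [he] at this
            omega
          rw [Function.update_of_ne this]
      rw [push_len, traj, agree _ le_rfl, ht]
      split_ifs with hp
      · simp
      · rw [hf hp]

theorem R_st (G : MWG V d) (σ : FCStratP2 V d) (v₀ : V) (m : Mem V d)
    (h : R G σ v₀ m) (i : ℕ) : R G σ v₀ (st m i) := by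
  induction h with
  | init => exact R.init
  | step m c' hm hs hf ih =>
    rcases Nat.lt_or_ge m.1.length i with h' | h'
    · rw [st_ge _ (by rw [push_len]; omega)]
      exact R.step m c' hm hs hf
    · rw [st_push _ _ _ _ h']; exact ih

theorem traj_step (G : MWG V d) (σ : FCStratP2 V d) (hval : ValidFCP2 G σ) (v₀ : V)
    (τ : Mem V d → Conf V d) (hτ : ∀ m, Step G m.2 (τ m)) (n : ℕ) :
    Step G (traj G σ v₀ τ n).2 (traj G σ v₀ τ (n+1)).2 ∧
    ((traj G σ v₀ τ n).2.1 ∉ G.P1 → (traj G σ v₀ τ (n+1)).2 = forced σ (traj G σ v₀ τ n)) := by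
  constructor
  · rw [traj]
    split_ifs with hp
    · exact hτ _
    · have := hval.2 (traj G σ v₀ τ n).1 _ hp
      simpa [Step, push, forced] using this
  · intro hp
    rw [traj, if_neg hp]; rfl

theorem chain (G : MWG V d) (σ : FCStratP2 V d) (hval : ValidFCP2 G σ) (v₀ : V) (m : Mem V d)
    (h : R G σ v₀ m) (i : ℕ) (hi : i < m.1.length) :
    st m (i+1) = push G σ (st m i) (st m (i+1)).2 ∧ Step G (st m i).2 (st m (i+1)).2 ∧
    ((st m i).2.1 ∉ G.P1 → (st m (i+1)).2 = forced σ (st m i)) := by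
  obtain ⟨τ, hτ, ht⟩ := exists_traj G σ v₀ m h
  have e1 : st m i = traj G σ v₀ τ i := by
    rw [← st_traj G σ v₀ τ m.1.length i (by omega), ht]
  have e2 : st m (i+1) = traj G σ v₀ τ (i+1) := by
    rw [← st_traj G σ v₀ τ m.1.length (i+1) (by omega), ht]
  rw [e1, e2]
  refine ⟨?_, traj_step G σ hval v₀ τ hτ i⟩
  rfl

/-- No vertex occurs twice on the stack. -/
def ND (m : Mem V d) : Prop :=
  ∀ i j, i < j → j ≤ m.1.length → (st m i).2.1 ≠ (st m j).2.1

theorem good_col (G : MWG V d) (σ : FCStratP2 V d) (hval : ValidFCP2 G σ) (m : Mem V d)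
    (h : m.2.1 ∈ G.P1) : Good (σ.col m.1 m.2) := by
  obtain ⟨-, -, f, -, -, he⟩ := hval.1 m.1 m.2 h
  rw [he]; exact good_PPHS _ _

theorem cycle_win (G : MWG V d) (σ : FCStratP2 V d) (hval : ValidFCP2 G σ) (v₀ : V)
    (hwin : ∀ ρ χ, IsPlay G v₀ ρ → LegalCols G ρ χ → FCConsistentP2 G σ ρ χ →
      ∀ n₀ n₁, FirstRepeat ρ n₀ n₁ → CycleWinP2 G ρ χ n₀ n₁)
    (m : Mem V d) (hR : R G σ v₀ m) (hnd : ND m) (c' : Conf V d) (hs : Step G m.2 c')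
    (hf : m.2.1 ∉ G.P1 → c' = forced σ m) (j : ℕ) (hj : j ≤ m.1.length)
    (hjv : (st m j).2.1 = c'.1) :
    ∃ A : Set (QVec d), Good A ∧
      (∀ i, j ≤ i → i ≤ m.1.length → (st m i).2.1 ∈ G.P1 →
        A ⊆ σ.col (st m i).1 (st m i).2) ∧
      intQ (c'.2 - (st m j).2.2) ∈ A := by
  obtain ⟨τ, hτ, ht⟩ := exists_traj G σ v₀ _ (R.step m c' hR hs hf)
  rw [push_len] at ht
  have e : ∀ i ≤ m.1.length, traj G σ v₀ τ i = st m i := by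
    intro i hi
    rw [← st_traj G σ v₀ τ (m.1.length + 1) i (by omega), ht, st_push _ _ _ _ hi]
  have ech : ∀ n, chist G (fun n => (traj G σ v₀ τ n).2)
      (fun n => σ.col (traj G σ v₀ τ n).1 (traj G σ v₀ τ n).2) n = (traj G σ v₀ τ n).1 := by
    intro n
    induction n with
    | zero => rfl
    | succ n ih =>
      rw [chist, List.range_succ, List.map_append]
      rw [chist] at ih
      rw [ih]
      rfl
  have := hwin (fun n => (traj G σ v₀ τ n).2)
    (fun n => σ.col (traj G σ v₀ τ n).1 (traj G σ v₀ τ n).2)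
    ⟨rfl, fun n => (traj_step G σ hval v₀ τ hτ n).1⟩
    (fun n hn => hval.1 _ _ hn)
    (fun n => by
      rw [ech]
      exact ⟨fun _ => rfl, fun hp => (traj_step G σ hval v₀ τ hτ n).2 hp⟩)
    j (m.1.length + 1)
    ⟨by omega, by
      show (traj G σ v₀ τ j).2.1 = (traj G σ v₀ τ (m.1.length + 1)).2.1
      rw [ht, e j hj, hjv]; rfl, by
      intro i k hik hk
      show (traj G σ v₀ τ i).2.1 ≠ (traj G σ v₀ τ k).2.1
      rw [e i (by omega), e k (by omega)]
      exact hnd i k hik (by omega)⟩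
  obtain ⟨A, ⟨k, -, -, f, -, hA⟩, h1, -, h2⟩ := this
  refine ⟨A, hA ▸ good_PPHS _ _, ?_, ?_⟩
  · intro i hji hi hp
    have := h1 i hji (by omega)
    simp only [e i hi] at this
    exact this hp
  · simp only [ht, e j hj] at h2
    exact h2

/-- The colour of the first Player-1 vertex reached by following `σ` from a memory
state with no cycle being closed. -/
inductive F (G : MWG V d) (σ : FCStratP2 V d) : Mem V d → Set (QVec d) → Prop
  | one (m : Mem V d) : m.2.1 ∈ G.P1 → F G σ m (σ.col m.1 m.2)
  | two (m : Mem V d) (γ : Set (QVec d)) : m.2.1 ∉ G.P1 →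
      (∀ i ≤ m.1.length, (st m i).2.1 ≠ (forced σ m).1) →
      F G σ (push G σ m (forced σ m)) γ → F G σ m γ

theorem F_on_stack (G : MWG V d) (σ : FCStratP2 V d) (hval : ValidFCP2 G σ) (v₀ : V)
    (m : Mem V d) (hR : R G σ v₀ m) (c' : Conf V d)
    (hf : m.2.1 ∉ G.P1 → c' = forced σ m) (j : ℕ) (hj : j ≤ m.1.length)
    (hjv : (st m j).2.1 = c'.1) (m' : Mem V d) (γ : Set (QVec d)) (hF : F G σ m' γ) :
    ∀ i ≤ m.1.length, m' = st m i →
      ∃ i', i ≤ i' ∧ i' ≤ m.1.length ∧ (st m i').2.1 ∈ G.P1 ∧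
        γ = σ.col (st m i').1 (st m i').2 := by
  induction hF with
  | one m' hp =>
    intro i hi he
    subst he
    exact ⟨i, le_rfl, hi, hp, rfl⟩
  | two m' γ hp hno _ ih =>
    intro i hi he
    subst he
    rcases Nat.lt_or_ge i m.1.length with h | h
    · obtain ⟨e1, -, e3⟩ := chain G σ hval v₀ m hR i h
      rw [e3 hp] at e1
      obtain ⟨i', a1, a2, a3, a4⟩ := ih (i+1) h e1.symm
      exact ⟨i', by omega, a2, a3, a4⟩
    · rw [st_ge m h] at hp hno
      exact (hno j hj (by rw [hjv, hf hp])).elim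

theorem F_exists (G : MWG V d) (σ : FCStratP2 V d) (hval : ValidFCP2 G σ) (v₀ : V)
    (m : Mem V d) (hR : R G σ v₀ m) (hnd : ND m) (k : ℕ) :
    ∀ i, i + k ≤ m.1.length → (st m (i + k)).2.1 ∈ G.P1 →
      ∃ i', i ≤ i' ∧ i' ≤ m.1.length ∧ (st m i').2.1 ∈ G.P1 ∧
        F G σ (st m i) (σ.col (st m i').1 (st m i').2) := by
  induction k with
  | zero =>
    intro i hi hp
    exact ⟨i, le_rfl, hi, hp, F.one _ hp⟩
  | succ k ih =>
    intro i hi hp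
    by_cases h : (st m i).2.1 ∈ G.P1
    · exact ⟨i, le_rfl, by omega, h, F.one _ h⟩
    · obtain ⟨i', a1, a2, a3, a4⟩ := ih (i+1) (by omega) (by rwa [Nat.add_right_comm])
      obtain ⟨e1, -, e3⟩ := chain G σ hval v₀ m hR i (by omega)
      refine ⟨i', by omega, a2, a3, F.two _ _ h ?_ ?_⟩
      · intro x hx
        rw [st_len m (by omega)] at hx
        rw [st_st m hx (by omega), ← e3 h]
        exact hnd x (i+1) (by omega) (by omega)
      · rw [e3 h] at e1
        rw [← e1]; exact a4

/-- Positive accumulated weights. -/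
def Tp (G : MWG V d) (σ : FCStratP2 V d) (m : Mem V d) (x : QVec d) : Prop :=
  ∃ A γ : Set (QVec d), Good A ∧ F G σ m γ ∧ A ⊆ γ ∧ x ∈ A

theorem pop_sum (G : MWG V d) (hcyc : EveryCycleHasP1 G)
    (σ : FCStratP2 V d) (hval : ValidFCP2 G σ) (v₀ : V)
    (hwin : ∀ ρ χ, IsPlay G v₀ ρ → LegalCols G ρ χ → FCConsistentP2 G σ ρ χ →
      ∀ n₀ n₁, FirstRepeat ρ n₀ n₁ → CycleWinP2 G ρ χ n₀ n₁)
    (m : Mem V d) (hR : R G σ v₀ m) (hnd : ND m) (c' : Conf V d) (hs : Step G m.2 c')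
    (hf : m.2.1 ∉ G.P1 → c' = forced σ m) (j : ℕ) (hj : j ≤ m.1.length)
    (hjv : (st m j).2.1 = c'.1) (W : ℕ → QVec d)
    (hW : ∀ i ≤ m.1.length, W i = 0 ∨ Tp G σ (st m i) (W i)) :
    Tp G σ (st m j)
      (intQ (c'.2 - (st m j).2.2) + ∑ i ∈ Finset.Ico j (m.1.length + 1), W i) := by
  obtain ⟨A, hA, hcol, hw⟩ := cycle_win G σ hval v₀ hwin m hR hnd c' hs hf j hj hjv
  have hex : ∃ i, j ≤ i ∧ i ≤ m.1.length ∧ (st m i).2.1 ∈ G.P1 := by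
    obtain ⟨k, hk, hp⟩ := hcyc (m.1.length + 1 - j)
      (fun k => if j + k ≤ m.1.length then (st m (j + k)).2 else c') (by omega)
      (by
        intro k hk
        have h1 : j + k ≤ m.1.length := by omega
        simp only [h1, if_true]
        split_ifs with h2
        · exact (chain G σ hval v₀ m hR (j + k) (by omega)).2.1
        · rw [st_ge m (by omega)]; exact hs)
      (by
        have h1 : ¬ (j + (m.1.length + 1 - j) ≤ m.1.length) := by omega
        simp only [h1, if_false]
        simpa [hj] using hjv)
    have h1 : j + k ≤ m.1.length := by omega
    simp only [h1, if_true] at hp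
    exact ⟨j + k, by omega, h1, hp⟩
  obtain ⟨i, h1, h2, h3⟩ := hex
  obtain ⟨i', a1, a2, a3, a4⟩ := F_exists G σ hval v₀ m hR hnd (i - j) j (by omega)
    (by rwa [Nat.add_sub_cancel' h1])
  refine ⟨A, _, hA, a4, hcol i' a1 a2 a3, ?_⟩
  have : ∀ s : Finset ℕ, s ⊆ Finset.Ico j (m.1.length + 1) →
      intQ (c'.2 - (st m j).2.2) + ∑ i ∈ s, W i ∈ A := by
    intro s
    induction s using Finset.induction_on with
    | empty => intro _; simpa using hw
    | insert x s hx ih =>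
      intro hsub
      have hxm := hsub (Finset.mem_insert_self x s)
      rw [Finset.mem_Ico] at hxm
      have hprev := ih (fun y hy => hsub (Finset.mem_insert_of_mem hy))
      rw [Finset.sum_insert hx, add_comm (W x), ← add_assoc]
      rcases hW x (by omega) with h0 | ⟨B, γ, hB, hFγ, hBγ, hxB⟩
      · rw [h0, add_zero]; exact hprev
      · obtain ⟨y, b1, b2, b3, b4⟩ := F_on_stack G σ hval v₀ m hR c' hf j hj hjv _ γ hFγ x
          (by omega) rfl
        subst b4
        exact good_add hA (good_col G σ hval _ b3) (hcol y (by omega) b2 b3) hBγ hprev hxB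
  exact this _ (Finset.Subset.refl _)

/-- The memory along a play. -/
def M (G : MWG V d) (σ : FCStratP2 V d) (ρ : ℕ → Conf V d) : ℕ → Mem V d
  | 0 => ([], ρ 0)
  | n + 1 => stepMem G σ (M G σ ρ n) ((ρ (n+1)).2 - (ρ n).2, (ρ (n+1)).1)

theorem memFold_M (G : MWG V d) (σ : FCStratP2 V d) (ρ : ℕ → Conf V d) (n : ℕ) :
    memFold G σ (ρ 0) ((List.range n).map (fun k => ρ (k+1))) = (M G σ ρ n, ρ n) := by
  induction n with
  | zero => rfl
  | succ n ih =>
    rw [List.range_succ, List.map_append, memFold, List.foldl_append]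
    rw [memFold] at ih
    rw [ih]
    rfl

theorem tilde_M (G : MWG V d) (σ : FCStratP2 V d) (ρ : ℕ → Conf V d) (n : ℕ) :
    tildeStrat G σ (hist ρ n) (ρ n) = σ.edge (M G σ ρ n).1 (M G σ ρ n).2 := by
  cases n with
  | zero => rfl
  | succ n =>
    have h := memFold_M G σ ρ (n+1)
    rw [List.range_succ, List.map_append] at h
    have h2 : hist ρ (n+1) = ρ 0 :: (List.range n).map (fun k => ρ (k+1)) := by
      rw [hist, List.range_succ_eq_map]
      simp [Function.comp_def]
    rw [h2]
    simp only [tildeStrat]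
    simp only [List.map_cons, List.map_nil] at h
    rw [h]

theorem play_inv (G : MWG V d) (σ : FCStratP2 V d) (v₀ : V) (ρ : ℕ → Conf V d)
    (hplay : IsPlay G v₀ ρ) (hcons : Consistent {v | v ∉ G.P1} (tildeStrat G σ) ρ) (n : ℕ) :
    ((M G σ ρ n).2.1 = (ρ n).1 ∧ R G σ v₀ (M G σ ρ n) ∧ ND (M G σ ρ n)) ∧
    ∃ c' : Conf V d, c'.1 = (ρ (n+1)).1 ∧
      c'.2 = (M G σ ρ n).2.2 + ((ρ (n+1)).2 - (ρ n).2) ∧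
      Step G (M G σ ρ n).2 c' ∧ ((M G σ ρ n).2.1 ∉ G.P1 → c' = forced σ (M G σ ρ n)) ∧
      (((∀ i ≤ (M G σ ρ n).1.length, (st (M G σ ρ n) i).2.1 ≠ c'.1) ∧
          M G σ ρ (n+1) = push G σ (M G σ ρ n) c') ∨
        ∃ j ≤ (M G σ ρ n).1.length, (st (M G σ ρ n) j).2.1 = c'.1 ∧
          M G σ ρ (n+1) = st (M G σ ρ n) j) := by
  have second : ∀ n, (M G σ ρ n).2.1 = (ρ n).1 → 
    ∃ c' : Conf V d, c'.1 = (ρ (n+1)).1 ∧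
      c'.2 = (M G σ ρ n).2.2 + ((ρ (n+1)).2 - (ρ n).2) ∧
      Step G (M G σ ρ n).2 c' ∧ ((M G σ ρ n).2.1 ∉ G.P1 → c' = forced σ (M G σ ρ n)) ∧
      (((∀ i ≤ (M G σ ρ n).1.length, (st (M G σ ρ n) i).2.1 ≠ c'.1) ∧
          M G σ ρ (n+1) = push G σ (M G σ ρ n) c') ∨
        ∃ j ≤ (M G σ ρ n).1.length, (st (M G σ ρ n) j).2.1 = c'.1 ∧
          M G σ ρ (n+1) = st (M G σ ρ n) j) := by
    intro n hv
    refine ⟨((ρ (n+1)).1, (M G σ ρ n).2.2 + ((ρ (n+1)).2 - (ρ n).2)), rfl, rfl, ?_, ?_, ?_⟩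
    · have := hplay.2 n
      rw [Step, ← hv] at this
      simpa [Step] using this
    · intro hp
      have := hcons n (by rw [← hv]; exact hp)
      rw [tilde_M] at this
      rw [this]
      simp [forced]
    · exact stepMem_cases G σ (M G σ ρ n) ((ρ (n+1)).2 - (ρ n).2, (ρ (n+1)).1)
  have first : (M G σ ρ n).2.1 = (ρ n).1 ∧ R G σ v₀ (M G σ ρ n) ∧ ND (M G σ ρ n) := by
    induction n with
    | zero =>
      refine ⟨rfl, ?_, ?_⟩
      · rw [M, hplay.1]; exact R.init
      · intro i j hij hj
        simp [M] at hj
        omega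
    | succ n ih =>
      obtain ⟨hv, hR, hnd⟩ := ih
      refine ⟨stepMem_vertex _ _ _ _, ?_⟩
      obtain ⟨c', -, -, hs, hf, h | h⟩ := second n hv
      · obtain ⟨hno, he⟩ := h
        rw [he]
        refine ⟨R.step _ _ hR hs hf, ?_⟩
        intro i j hij hj
        rw [push_len] at hj
        rw [st_push _ _ _ _ (by omega)]
        rcases Nat.lt_or_ge (M G σ ρ n).1.length j with h' | h'
        · rw [st_ge (push _ _ _ _) (by rw [push_len]; omega)]
          exact hno i (by omega)
        · rw [st_push _ _ _ _ h']
          exact hnd i j hij h'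
      · obtain ⟨k, hk, -, he⟩ := h
        rw [he]
        refine ⟨R_st _ _ _ _ hR _, ?_⟩
        intro i j hij hj
        rw [st_len _ hk] at hj
        rw [st_st _ (by omega) hk, st_st _ (by omega) hk]
        exact hnd i j hij (by omega)
  exact ⟨first, second n first.1⟩

theorem intQ_add (a b : Fin d → ℤ) : intQ (a + b) = intQ a + intQ b := by
  ext i; simp [intQ]

theorem walk_inv (G : MWG V d) (hcyc : EveryCycleHasP1 G)
    (σ : FCStratP2 V d) (hval : ValidFCP2 G σ) (v₀ : V)
    (hwin : ∀ ρ χ, IsPlay G v₀ ρ → LegalCols G ρ χ → FCConsistentP2 G σ ρ χ →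
      ∀ n₀ n₁, FirstRepeat ρ n₀ n₁ → CycleWinP2 G ρ χ n₀ n₁)
    (ρ : ℕ → Conf V d)
    (hplay : IsPlay G v₀ ρ) (hcons : Consistent {v | v ∉ G.P1} (tildeStrat G σ) ρ)
    (p : ℕ) (hL : ∀ n, p ≤ n → (M G σ ρ p).1.length ≤ (M G σ ρ n).1.length) (k : ℕ) :
    st (M G σ ρ (p + k)) (M G σ ρ p).1.length = M G σ ρ p ∧
    ∃ W : ℕ → QVec d, (∀ i < (M G σ ρ p).1.length, W i = 0) ∧
      (∀ i ≤ (M G σ ρ (p + k)).1.length, W i = 0 ∨ Tp G σ (st (M G σ ρ (p + k)) i) (W i)) ∧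
      intQ (((ρ (p + k)).2 - (M G σ ρ (p + k)).2.2) - ((ρ p).2 - (M G σ ρ p).2.2)) =
        ∑ i ∈ Finset.range ((M G σ ρ (p + k)).1.length + 1), W i ∧
      (0 < k → (M G σ ρ (p + k)).1.length = (M G σ ρ p).1.length →
        Tp G σ (M G σ ρ (p + k)) (W (M G σ ρ p).1.length)) := by
  induction k with
  | zero =>
    refine ⟨st_ge _ le_rfl, fun _ => 0, fun _ _ => rfl, fun _ _ => Or.inl rfl, ?_, ?_⟩
    · simp; ext i; simp [intQ]
    · intro h; exact (lt_irrefl _ h).elim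
  | succ k ih =>
    obtain ⟨hbase, W, hW0, hWT, hsum, -⟩ := ih
    obtain ⟨⟨hv, hR, hnd⟩, c', hc1, hc2, hs, hf, h⟩ := play_inv G σ v₀ ρ hplay hcons (p + k)
    have hLn := hL (p + k) (by omega)
    have hLn1 := hL (p + k + 1) (by omega)
    rw [show p + (k + 1) = p + k + 1 from rfl]
    set m := M G σ ρ (p + k) with hm
    set L := (M G σ ρ p).1.length with hLdef
    rcases h with ⟨hno, he⟩ | ⟨j, hj, hjv, he⟩
    · rw [he]
      refine ⟨by rw [st_push _ _ _ _ hLn, hbase],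
        fun i => if i ≤ m.1.length then W i else 0, ?_, ?_, ?_, ?_⟩
      · intro i hi
        simp only [hW0 i hi, ite_self]
      · intro i hi
        by_cases h' : i ≤ m.1.length
        · rw [st_push _ _ _ _ h']
          simpa [h'] using hWT i h'
        · left; simp [h']
      · rw [push_len, Finset.sum_range_succ]
        have : ∑ i ∈ Finset.range (m.1.length + 1), (if i ≤ m.1.length then W i else 0) =
            ∑ i ∈ Finset.range (m.1.length + 1), W i := by
          apply Finset.sum_congr rfl
          intro i hi
          rw [Finset.mem_range] at hi
          rw [if_pos (by omega)]
        rw [this, ← hsum]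
        simp only [push, hc2]
        rw [if_neg (by omega), add_zero]
        congr 1
        abel
      · intro _ hl
        rw [push_len] at hl
        omega
    · rw [he]
      rw [he, st_len _ hj] at hLn1
      rw [st_len _ hj]
      have hT := pop_sum G hcyc σ hval v₀ hwin m hR hnd c' hs hf j hj hjv W hWT
      refine ⟨by rw [st_st _ hLn1 hj, hbase],
        fun i => if i < j then W i else
          intQ (c'.2 - (st m j).2.2) + ∑ i ∈ Finset.Ico j (m.1.length + 1), W i, ?_, ?_, ?_, ?_⟩
      · intro i hi
        simp only [show i < j by omega, if_true, hW0 i hi]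
      · intro i hi
        rw [st_st _ hi hj]
        by_cases h' : i < j
        · simpa [h'] using hWT i (by omega)
        · obtain rfl : i = j := by omega
          right
          simpa using hT
      · rw [Finset.sum_range_succ]
        have : ∑ i ∈ Finset.range j, (if i < j then W i else
            intQ (c'.2 - (st m j).2.2) + ∑ i ∈ Finset.Ico j (m.1.length + 1), W i) =
            ∑ i ∈ Finset.range j, W i := by
          apply Finset.sum_congr rfl
          intro i hi
          rw [Finset.mem_range] at hi
          rw [if_pos hi]
        rw [this, if_neg (lt_irrefl _), add_left_comm,
          Finset.sum_range_add_sum_Ico _ (by omega : j ≤ m.1.length + 1), ← hsum, ← intQ_add, hc2]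
        congr 1
        abel
      · intro _ hl
        subst hl
        simpa using hT

theorem len_bound (m : Mem V d) (h : ND m) : m.1.length < Fintype.card V := by
  have hinj : Function.Injective (fun i : Fin (m.1.length + 1) => (st m i).2.1) := by
    intro i j hij
    rcases lt_trichotomy (i : ℕ) j with h' | h' | h'
    · exact (h i j h' (by omega) hij).elim
    · exact Fin.ext h'
    · exact (h j i h' (by omega) hij.symm).elim
  have := Fintype.card_le_of_injective _ hinj
  simp at this
  omega

theorem finite_bounded (B : ℕ) : {u : Fin d → ℤ | vnorm u ≤ B}.Finite := by
  apply (Set.finite_Icc (fun _ : Fin d => -(B : ℤ)) (fun _ => (B : ℤ))).subset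
  intro u hu
  have : ∀ i, (u i).natAbs ≤ B := fun i =>
    le_trans (Finset.le_sup (f := fun i => (u i).natAbs) (Finset.mem_univ i)) hu
  constructor
  · intro i; have := this i; show -(B : ℤ) ≤ u i; omega
  · intro i; have := this i; show u i ≤ (B : ℤ); omega

theorem exists_low (l : ℕ → ℕ) (N : ℕ) (hl : ∀ n, l n < N) :
    ∃ L n0, (∀ n, n0 ≤ n → L ≤ l n) ∧ {n | n0 ≤ n ∧ l n = L}.Infinite := by
  classical
  have hex : ∃ L, {n | l n = L}.Infinite := by
    by_contra hcon
    push Not at hcon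
    have : (⋃ L ∈ Set.Iio N, {n | l n = L}).Finite :=
      (Set.finite_Iio N).biUnion (fun L _ => hcon L)
    apply Set.infinite_univ (α := ℕ)
    apply this.subset
    intro n _
    simp [hl n]
  have hfin : (⋃ L ∈ Set.Iio (Nat.find hex), {n | l n = L}).Finite :=
    (Set.finite_Iio _).biUnion (fun L hL => Set.not_infinite.1 (Nat.find_min hex hL))
  obtain ⟨b, hb⟩ := hfin.bddAbove
  refine ⟨Nat.find hex, b + 1, ?_, ?_⟩
  · intro n hn
    by_contra hlt
    have : n ≤ b := hb (Set.mem_biUnion (Set.mem_Iio.2 (Nat.lt_of_not_le hlt)) rfl)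
    omega
  · have := (Nat.find_spec hex).sdiff (Set.finite_Iio (b + 1))
    apply this.mono
    rintro n ⟨h1, h2⟩
    exact ⟨by simpa using h2, h1⟩

theorem unbounded (G : MWG V d) (hcyc : EveryCycleHasP1 G)
    (σ : FCStratP2 V d) (hval : ValidFCP2 G σ) (v₀ : V)
    (hwin : ∀ ρ χ, IsPlay G v₀ ρ → LegalCols G ρ χ → FCConsistentP2 G σ ρ χ →
      ∀ n₀ n₁, FirstRepeat ρ n₀ n₁ → CycleWinP2 G ρ χ n₀ n₁)
    (ρ : ℕ → Conf V d)
    (hplay : IsPlay G v₀ ρ) (hcons : Consistent {v | v ∉ G.P1} (tildeStrat G σ) ρ) :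
    ¬ BoundedPlay ρ := by
  rintro ⟨B, hB⟩
  obtain ⟨L, n0, hL, hinf⟩ := exists_low (fun n => (M G σ ρ n).1.length) (Fintype.card V)
    (fun n => len_bound _ (play_inv G σ v₀ ρ hplay hcons n).1.2.2)
  obtain ⟨p, hp, q, hq, hpq, he⟩ := hinf.exists_lt_map_eq_of_mapsTo
    (f := fun n => (ρ n).2) (fun n _ => hB n) (finite_bounded B)
  obtain ⟨hp0, hp1⟩ := hp
  obtain ⟨hq0, hq1⟩ := hq
  obtain ⟨k, rfl⟩ := Nat.exists_eq_add_of_lt hpq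
  obtain ⟨h1, W, h2, -, h4, h5⟩ := walk_inv G hcyc σ hval v₀ hwin ρ hplay hcons p
    (fun n hn => by rw [hp1]; exact hL n (by omega)) (k + 1)
  rw [← Nat.add_assoc] at *
  have h6 := h5 (by omega) (by omega)
  rw [st_ge _ (by omega)] at h1
  rw [h1, he, hp1] at h4
  rw [hp1] at h6 h2
  rw [Finset.sum_range_succ, Finset.sum_eq_zero (fun i hi => h2 i (Finset.mem_range.1 hi))] at h4
  have h7 : W L = 0 := by
    rw [zero_add] at h4
    rw [← h4]
    ext i; simp [intQ]
  rw [h7] at h6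
  obtain ⟨A, γ, hA, -, -, h0⟩ := h6
  exact hA.zero h0

end TW

/-- Lemma 6: if `σ` is winning for Player 2 in the
first-cycle bounding game from `v₀`, then `σ̃` is winning for Player 2 in the
bounding game from `v₀`. -/
theorem tilde_strategy_winning
    (V : Type) [Fintype V] [DecidableEq V] (d : ℕ) (G : MWG V d)
    (hE : 0 < enorm G) (hcyc : EveryCycleHasP1 G) (v₀ : V)
    (σ : FCStratP2 V d) (hval : ValidFCP2 G σ)
    (hwin : ∀ ρ χ, IsPlay G v₀ ρ → LegalCols G ρ χ → FCConsistentP2 G σ ρ χ →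
      ∀ n₀ n₁, FirstRepeat ρ n₀ n₁ → CycleWinP2 G ρ χ n₀ n₁) :
    ValidStrat G {v | v ∉ G.P1} (tildeStrat G σ) ∧
    ∀ ρ, IsPlay G v₀ ρ → Consistent {v | v ∉ G.P1} (tildeStrat G σ) ρ →
      ¬ BoundedPlay ρ := by
  refine ⟨?_, fun ρ hplay hcons => TW.unbounded G hcyc σ hval v₀ hwin ρ hplay hcons⟩
  intro h c _ hc
  cases h with
  | nil => exact hval.2 _ _ hc
  | cons c₀ rest =>
    have hv : (memFold G σ c₀ (rest ++ [c])).1.2.1 = c.1 := by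
      rw [memFold, List.foldl_append]
      exact TW.stepMem_vertex _ _ _ _
    have := hval.2 (memFold G σ c₀ (rest ++ [c])).1.1 (memFold G σ c₀ (rest ++ [c])).1.2
      (by rw [hv]; exact hc)
    rw [hv] at this
    exact this
end
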